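/- arXiv:1611.07214 — 7 statements merged into one kernel-verified Lean document; each statement's English description precedes it below -/
import Mathlib

section
/- Leaf-Average Node-Sum Interchange (LANSIT) with a general length function: Let T be a rooted tree with no infinite geodesic, no vertex having exactly one successor, nonempty boundary ∂T, length function ℓ, and let P be a fully supported probability measure on ∂T with finite expected length ℓ(P). Let p(·|·) be the associated forward Markov chain and μ_P the node-average measure. If f : T → ℝ satisfies ∑_{x ∈ interior T} μ_P(x)·|Δ_P|f(x) < ∞, then the function v ↦ f(v) is absolutely summable with respect to P on ∂T, and (1/ℓ(P))·∑_{v ∈ ∂T} (f(v) − f(o))·P(v) = ∑_{x ∈ interior T} μ_P(x)·Δ_P f(x). -/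
open scoped BigOperators
open Filter

noncomputable section

/-- The entropy function `φ(t) = t·log₂(1/t)` (which vanishes at `t = 0`). -/
def phi (t : ℝ) : ℝ := t * Real.logb 2 (1 / t)

/-- A rooted tree: a set of finite lists over ℕ containing the empty list (the root)
and closed under taking prefixes. -/
def IsTree (T : Set (List ℕ)) : Prop :=
  ([] : List ℕ) ∈ T ∧ ∀ x ∈ T, ∀ y : List ℕ, y <+: x → y ∈ T

/-- The successors of `x` in `T`: one-entry extensions of `x` lying in `T`. -/
def succs (T : Set (List ℕ)) (x : List ℕ) : Set (List ℕ) :=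
  {y | y ∈ T ∧ ∃ n : ℕ, y = x ++ [n]}

/-- `x` is a leaf of `T`. -/
def IsLeaf (T : Set (List ℕ)) (x : List ℕ) : Prop :=
  x ∈ T ∧ succs T x = ∅

/-- The boundary of `T`: its set of leaves. -/
def bdry (T : Set (List ℕ)) : Set (List ℕ) := {x | IsLeaf T x}

/-- The interior of `T`. -/
def intr (T : Set (List ℕ)) : Set (List ℕ) := T \ bdry T

/-- No vertex has exactly one successor. -/
def NoUnary (T : Set (List ℕ)) : Prop :=
  ∀ x ∈ T, ∀ y : List ℕ, succs T x ≠ {y}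

/-- `T` has no infinite geodesic. -/
def NoInfGeo (T : Set (List ℕ)) : Prop :=
  ¬ ∃ ξ : ℕ → ℕ, ∀ n : ℕ, (List.ofFn fun i : Fin n => ξ i) ∈ T

/-- `∂T_x`: the set of leaves having `x` as a prefix. -/
def cone (T : Set (List ℕ)) (x : List ℕ) : Set (List ℕ) :=
  {v | v ∈ bdry T ∧ x <+: v}

/-- `P(∂T_x)`. -/
def mass (T : Set (List ℕ)) (P : List ℕ → ℝ) (x : List ℕ) : ℝ :=
  ∑' v : cone T x, P v

/-- `|x|_ℓ`: the sum of `ℓ(y)` over the proper prefixes `y` of `x`. -/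
def lenWt (ℓ : List ℕ → ℝ) (x : List ℕ) : ℝ :=
  ∑ i ∈ Finset.range x.length, ℓ (x.take i)

/-- Expected length `ℓ(P)`. -/
def expLen (T : Set (List ℕ)) (ℓ P : List ℕ → ℝ) : ℝ :=
  ∑' v : bdry T, lenWt ℓ v * P v

/-- Forward transition probability `p(y|x) = P(∂T_y)/P(∂T_x)`. -/
def fwd (T : Set (List ℕ)) (P : List ℕ → ℝ) (x y : List ℕ) : ℝ :=
  mass T P y / mass T P x

/-- Node-average measure `μ_P(x) = ℓ(x)·P(∂T_x)/ℓ(P)`. -/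
def nodeAvg (T : Set (List ℕ)) (ℓ P : List ℕ → ℝ) (x : List ℕ) : ℝ :=
  ℓ x * mass T P x / expLen T ℓ P

/-- A (fully supported) probability measure on a set `S` of vertices. -/
def IsProbOn (S : Set (List ℕ)) (P : List ℕ → ℝ) : Prop :=
  (∀ v ∈ S, 0 < P v) ∧ HasSum (fun v : S => P v) 1

/-- `|Δ_P|f(x) = (1/ℓ(x))·∑_{y∈N(x)} |f(y) − f(x)|·p(y|x)`. -/
def absLap (T : Set (List ℕ)) (ℓ P : List ℕ → ℝ) (f : List ℕ → ℝ) (x : List ℕ) : ℝ :=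
  (1 / ℓ x) * ∑' y : succs T x, |f y - f x| * fwd T P x y

/-- `Δ_P f(x) = (1/ℓ(x))·∑_{y∈N(x)} (f(y) − f(x))·p(y|x)`. -/
def lap (T : Set (List ℕ)) (ℓ P : List ℕ → ℝ) (f : List ℕ → ℝ) (x : List ℕ) : ℝ :=
  (1 / ℓ x) * ∑' y : succs T x, (f y - f x) * fwd T P x y

theorem aux_take_intr {T : Set (List ℕ)} (hT : IsTree T) {v : List ℕ} (hv : v ∈ T) {i : ℕ}
    (hi : i < v.length) : v.take (i+1) ∈ succs T (v.take i) ∧ v.take i ∈ intr T := by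
  have h1 : v.take (i+1) ∈ succs T (v.take i) := by
    refine ⟨hT.2 v hv _ (List.take_prefix _ _), v[i], ?_⟩
    simp
  refine ⟨h1, hT.2 v hv _ (List.take_prefix _ _), fun h => ?_⟩
  have h2 := h.2
  rw [h2] at h1
  exact h1

abbrev EdgeT (T : Set (List ℕ)) : Type := Σ x : intr T, succs T x.1
abbrev TripT (T : Set (List ℕ)) : Type := Σ a : EdgeT T, cone T a.2.1

theorem trip_ext {T : Set (List ℕ)} (b c : TripT T) (h1 : b.1.1.1 = c.1.1.1)
    (h2 : b.1.2.1 = c.1.2.1) (h3 : b.2.1 = c.2.1) : b = c := by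
  obtain ⟨⟨⟨x, hx⟩, ⟨y, hy⟩⟩, ⟨v, hv⟩⟩ := b
  obtain ⟨⟨⟨x', hx'⟩, ⟨y', hy'⟩⟩, ⟨v', hv'⟩⟩ := c
  dsimp only at h1 h2 h3
  subst h1 h2 h3
  rfl

def toTrip {T : Set (List ℕ)} (hT : IsTree T) (p : Σ v : bdry T, Fin v.1.length) : TripT T :=
  ⟨⟨⟨p.1.1.take p.2.1, (aux_take_intr hT p.1.2.1 p.2.2).2⟩,
    ⟨p.1.1.take (p.2.1+1), (aux_take_intr hT p.1.2.1 p.2.2).1⟩⟩,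
    ⟨p.1.1, p.1.2, List.take_prefix _ _⟩⟩

theorem toTrip_bij {T : Set (List ℕ)} (hT : IsTree T) : Function.Bijective (toTrip hT) := by
  constructor
  · rintro ⟨⟨v, hv⟩, i⟩ ⟨⟨w, hw⟩, j⟩ h
    have h3 : v = w := congrArg (fun b : TripT T => b.2.1) h
    have h1 : v.take i.1 = w.take j.1 := congrArg (fun b : TripT T => b.1.1.1) h
    subst h3
    have := congrArg List.length h1
    have hi := i.2
    have hj := j.2
    simp only [List.length_take] at this
    have : i = j := Fin.ext (by dsimp only at hi hj; omega)
    subst this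
    rfl
  · rintro ⟨⟨⟨x, hx⟩, ⟨y, hy⟩⟩, ⟨v, hv⟩⟩
    obtain ⟨hyT, n, rfl⟩ := hy
    obtain ⟨hvb, t, ht⟩ := hv
    refine ⟨⟨⟨v, hvb⟩, ⟨x.length, ?_⟩⟩, trip_ext _ _ ?_ ?_ ?_⟩
    · dsimp only; rw [← ht]; simp
    · simp [toTrip, ← ht]
    · simp [toTrip, ← ht, List.take_append]
    · rfl

theorem mass_fwd {T : Set (List ℕ)} {P : List ℕ → ℝ} (hP : IsProbOn (bdry T) P) {x y : List ℕ}
    (hy : y ∈ succs T x) : mass T P x * fwd T P x y = mass T P y := by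
  have hs : ∀ x, Summable (fun v : cone T x => P v) := fun x =>
    hP.2.summable.comp_injective (i := fun v : cone T x => (⟨v.1, v.2.1⟩ : bdry T))
      (fun a b h => Subtype.ext (congrArg (fun c : bdry T => c.1) h))
  have hn : ∀ x, 0 ≤ mass T P x := fun x => tsum_nonneg fun v => (hP.1 _ v.2.1).le
  have hle : mass T P y ≤ mass T P x := by
    obtain ⟨_, n, rfl⟩ := hy
    have hsub : ∀ v : cone T (x ++ [n]), v.1 ∈ cone T x :=
      fun v => ⟨v.2.1, (List.prefix_append x [n]).trans v.2.2⟩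
    refine Summable.tsum_le_tsum_of_inj (fun v : cone T (x ++ [n]) => (⟨v.1, hsub v⟩ : cone T x))
      (fun a b h => Subtype.ext (congrArg (fun c : cone T x => c.1) h))
      (fun c _ => (hP.1 _ c.2.1).le) (fun _ => le_rfl) (hs _) (hs _)
  unfold fwd
  by_cases h : mass T P x = 0
  · have := hn y
    rw [h]; simp; linarith
  · field_simp

/-- Leaf-Average Node-Sum Interchange Theorem (LANSIT) with a general length function. -/
theorem lansit
    (T : Set (List ℕ)) (hT : IsTree T) (hU : NoUnary T) (hG : NoInfGeo T)
    (hB : (bdry T).Nonempty)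
    (ℓ : List ℕ → ℝ) (hℓ : ∀ x ∈ intr T, 0 < ℓ x)
    (P : List ℕ → ℝ) (hP : IsProbOn (bdry T) P)
    (hlen : Summable fun v : bdry T => lenWt ℓ v * P v)
    (f : List ℕ → ℝ)
    (habs : ∀ x ∈ intr T, Summable fun y : succs T x => |f y - f x| * fwd T P x y)
    (hsum : Summable fun x : intr T => nodeAvg T ℓ P x * absLap T ℓ P f x) :
    (Summable fun v : bdry T => f v * P v) ∧
    (1 / expLen T ℓ P) * (∑' v : bdry T, (f v - f ([] : List ℕ)) * P v)
      = ∑' x : intr T, nodeAvg T ℓ P x * lap T ℓ P f x := by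
  have hlw : ∀ v ∈ bdry T, ∀ i ∈ Finset.range v.length, 0 < ℓ (v.take i) := fun v hv i hi =>
    hℓ _ (aux_take_intr hT hv.1 (Finset.mem_range.1 hi)).2
  by_cases hL : expLen T ℓ P = 0
  · refine ⟨?_, by simp [nodeAvg, hL]⟩
    have hnn : ∀ v : bdry T, 0 ≤ lenWt ℓ v * P v := fun v =>
      mul_nonneg (Finset.sum_nonneg fun i hi => (hlw v.1 v.2 i hi).le) (hP.1 _ v.2).le
    have h0 : ∀ v : bdry T, v.1 = [] := by
      intro v
      by_contra hne
      have hpos : 0 < lenWt ℓ v * P v := by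
        refine mul_pos (Finset.sum_pos (hlw v.1 v.2) ⟨0, ?_⟩) (hP.1 _ v.2)
        exact Finset.mem_range.2 (List.length_pos_iff.2 hne)
      have := hlen.tsum_pos hnn v hpos
      exact this.ne' hL
    have : Subsingleton (bdry T) := ⟨fun a b => Subtype.ext ((h0 a).trans (h0 b).symm)⟩
    exact Summable.of_finite
  have hs : ∀ x, Summable (fun v : cone T x => P v) := fun x =>
    hP.2.summable.comp_injective (i := fun v : cone T x => (⟨v.1, v.2.1⟩ : bdry T))
      (fun a b h => Subtype.ext (congrArg (fun c : bdry T => c.1) h))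
  have key : ∀ (g : List ℕ → List ℕ → ℝ) (x : intr T), mass T P x *
      ∑' y : succs T x, g x y * fwd T P x y = ∑' y : succs T x, g x y * mass T P y := by
    intro g x
    rw [← tsum_mul_left]
    refine tsum_congr fun y => ?_
    rw [← mass_fwd hP y.2]; ring
  have keyA : ∀ x : intr T, expLen T ℓ P * (nodeAvg T ℓ P x * absLap T ℓ P f x)
      = ∑' y : succs T x, |f y - f x| * mass T P y := by
    intro x
    rw [← key (fun a b => |f b - f a|) x]
    have := (hℓ x x.2).ne'
    unfold nodeAvg absLap
    field_simp
  have keyL : ∀ x : intr T, expLen T ℓ P * (nodeAvg T ℓ P x * lap T ℓ P f x)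
      = ∑' y : succs T x, (f y - f x) * mass T P y := by
    intro x
    rw [← key (fun a b => f b - f a) x]
    have := (hℓ x x.2).ne'
    unfold nodeAvg lap
    field_simp
  have hmn : ∀ x, 0 ≤ mass T P x := fun x => tsum_nonneg fun v => (hP.1 _ v.2.1).le
  have hA : Summable fun a : EdgeT T => |f a.2.1 - f a.1.1| * mass T P a.2.1 := by
    rw [summable_sigma_of_nonneg (fun a => mul_nonneg (abs_nonneg _) (hmn _))]
    refine ⟨fun x => ?_, ?_⟩
    · refine ((habs x x.2).mul_left (mass T P x)).congr fun y => ?_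
      rw [← mass_fwd hP y.2]; ring
    · exact (hsum.mul_left (expLen T ℓ P)).congr fun x => keyA x
  have hGabs : Summable fun b : TripT T => |f b.1.2.1 - f b.1.1.1| * P b.2.1 := by
    rw [summable_sigma_of_nonneg (fun b => mul_nonneg (abs_nonneg _) (hP.1 _ b.2.2.1).le)]
    refine ⟨fun a => ?_, ?_⟩
    · exact (hs a.2.1).mul_left (|f a.2.1 - f a.1.1|)
    · refine hA.congr fun a => ?_
      exact (tsum_mul_left (f := fun v : cone T a.2.1 => P v) (a := |f a.2.1 - f a.1.1|)).symm
  have hGs : Summable fun b : TripT T => (f b.1.2.1 - f b.1.1.1) * P b.2.1 := by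
    refine Summable.of_abs (hGabs.congr fun b => ?_)
    rw [abs_mul, abs_of_pos (hP.1 _ b.2.2.1)]
  have hA' : Summable fun a : EdgeT T => (f a.2.1 - f a.1.1) * mass T P a.2.1 := by
    refine Summable.of_abs (hA.congr fun b => ?_)
    rw [abs_mul, abs_of_nonneg (hmn _)]
  have e1 : ∑' b : TripT T, (f b.1.2.1 - f b.1.1.1) * P b.2.1
      = expLen T ℓ P * ∑' x : intr T, nodeAvg T ℓ P x * lap T ℓ P f x := by
    rw [hGs.tsum_sigma, ← tsum_mul_left]
    have : ∀ a : EdgeT T, ∑' v : cone T a.2.1, (f a.2.1 - f a.1.1) * P v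
        = (f a.2.1 - f a.1.1) * mass T P a.2.1 := fun a => tsum_mul_left
    refine (tsum_congr this).trans (hA'.tsum_sigma.trans ?_)
    exact tsum_congr fun x => (keyL x).symm
  let e := Equiv.ofBijective _ (toTrip_bij hT)
  have hGe := (e.summable_iff).2 hGs
  have hfib : ∀ v : bdry T, ∑' i : Fin v.1.length,
      ((fun b : TripT T => (f b.1.2.1 - f b.1.1.1) * P b.2.1) ∘ e) ⟨v, i⟩
      = (f v - f ([] : List ℕ)) * P v := by
    intro v
    rw [tsum_fintype]
    change ∑ i : Fin v.1.length, (f (v.1.take (i.1+1)) - f (v.1.take i.1)) * P v.1 = _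
    rw [← Finset.sum_mul,
      Fin.sum_univ_eq_sum_range (fun i => f (v.1.take (i+1)) - f (v.1.take i)) v.1.length,
      Finset.sum_range_sub (fun i => f (v.1.take i))]
    simp
  have e2 : ∑' b : TripT T, (f b.1.2.1 - f b.1.1.1) * P b.2.1
      = ∑' v : bdry T, (f v - f ([] : List ℕ)) * P v := by
    rw [← e.tsum_eq]
    exact (hGe.tsum_sigma).trans (tsum_congr hfib)
  constructor
  · have h1 := (hGe.sigma).congr fun v => (hfib v)
    refine (h1.add (hP.2.summable.mul_left (f []))).congr fun v => ?_
    ring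
  · rw [← e2, e1]
    field_simp
end
end

section
/- Entropy interchange formula: Let T be a rooted tree with no infinite geodesic, no vertex with exactly one successor, nonempty boundary, length function ℓ, and P a fully supported probability measure on ∂T with ℓ(P) < ∞. If the entropy H(P) = ∑_{v∈∂T} P(v)·log₂(1/P(v)) is finite, then the local entropy H_p(x) = ∑_{y∈N(x)} p(y|x)·log₂(1/p(y|x)) is finite for every interior node x, and H(P)/ℓ(P) = ∑_{x ∈ interior T} μ_P(x)·H_p(x)/ℓ(x). -/
open scoped BigOperators
open Filter

noncomputable section

/-- The local entropy `H_p(x) = ∑_{y∈N(x)} φ(p(y|x))` at an interior node `x`. -/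
def Hloc (T : Set (List ℕ)) (P : List ℕ → ℝ) (x : List ℕ) : ℝ :=
  ∑' y : succs T x, phi (fwd T P x y)

lemma cone_nonempty' (T : Set (List ℕ)) (hT : IsTree T) (hG : NoInfGeo T)
    (x : List ℕ) (hx : x ∈ T) : (cone T x).Nonempty := by
  by_contra hne
  have step : ∀ z : List ℕ, ∃ n : ℕ, (z ∈ T ∧ ¬ (cone T z).Nonempty) →
      (z ++ [n] ∈ T ∧ ¬ (cone T (z ++ [n])).Nonempty) := by
    intro z
    by_cases hz : z ∈ T ∧ ¬ (cone T z).Nonempty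
    · have h1 : succs T z ≠ ∅ := by
        intro h
        exact hz.2 ⟨z, ⟨hz.1, h⟩, List.prefix_refl z⟩
      obtain ⟨y, hy, n, rfl⟩ := Set.nonempty_iff_ne_empty.mpr h1
      refine ⟨n, fun _ => ⟨hy, ?_⟩⟩
      rintro ⟨v, hv, hp⟩
      exact hz.2 ⟨v, hv, (List.prefix_append z [n]).trans hp⟩
    · exact ⟨0, fun h => absurd h hz⟩
  choose f hf using step
  let s : ℕ → List ℕ := fun k => Nat.rec x (fun _ z => z ++ [f z]) k
  have s0 : s 0 = x := rfl
  have ss : ∀ k, s (k + 1) = s k ++ [f (s k)] := fun k => rfl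
  have hs : ∀ k, s k ∈ T ∧ ¬ (cone T (s k)).Nonempty := by
    intro k
    induction k with
    | zero => exact ⟨hx, hne⟩
    | succ k ih => rw [ss]; exact hf _ ih
  have hl : ∀ k, k ≤ (s k).length := by
    intro k
    induction k with
    | zero => simp
    | succ k ih => rw [ss]; simp; exact ih
  have hmono : ∀ m n, m ≤ n → s m <+: s n := by
    intro m n hmn
    induction n, hmn using Nat.le_induction with
    | base => exact List.prefix_refl _
    | succ n _ ih => rw [ss]; exact ih.trans (List.prefix_append _ _)
  apply hG
  refine ⟨fun i => (s (i + 1))[i]'(hl (i + 1)), fun n => ?_⟩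
  have : (List.ofFn fun i : Fin n => (s (i + 1))[(i : ℕ)]'(hl (i + 1))) = (s n).take n := by
    apply List.ext_getElem
    · simp [hl n]
    · intro i h1 h2
      simp only [List.getElem_ofFn, List.getElem_take]
      have hi : i + 1 ≤ n := by simpa using h1
      exact (hmono _ _ hi).getElem (hl (i + 1))
  rw [this]
  exact hT.2 _ (hs n).1 _ (List.take_prefix _ _)

lemma leaf_prefix (T : Set (List ℕ)) (hT : IsTree T) {v w : List ℕ} (hv : v ∈ bdry T)
    (hw : w ∈ T) (h : v <+: w) : w = v := by
  obtain ⟨t, rfl⟩ := h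
  cases t with
  | nil => simp
  | cons a t =>
    exfalso
    have : v ++ [a] ∈ succs T v := ⟨hT.2 _ hw _ ⟨t, by simp⟩, a, rfl⟩
    rw [hv.2] at this
    exact this

lemma summable_sub (T : Set (List ℕ)) (P : List ℕ → ℝ) (hP : IsProbOn (bdry T) P)
    (S : Set (List ℕ)) (hS : S ⊆ bdry T) : Summable fun v : S => P v :=
  hP.2.summable.comp_injective (i := Set.inclusion hS) (Set.inclusion_injective hS)

lemma mass_anti (T : Set (List ℕ)) (P : List ℕ → ℝ) (hP : IsProbOn (bdry T) P)
    {x y : List ℕ} (h : x <+: y) : mass T P y ≤ mass T P x := by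
  have hsub : cone T y ⊆ cone T x := fun v hv => ⟨hv.1, h.trans hv.2⟩
  have h1 := summable_sub T P hP (cone T y) (fun v hv => hv.1)
  have h2 := summable_sub T P hP (cone T x) (fun v hv => hv.1)
  exact Summable.tsum_le_tsum_of_inj (Set.inclusion hsub) (Set.inclusion_injective hsub)
    (fun c _ => (hP.1 _ c.2.1).le) (fun _ => le_rfl) h1 h2

lemma mass_pos (T : Set (List ℕ)) (hT : IsTree T) (hG : NoInfGeo T)
    (P : List ℕ → ℝ) (hP : IsProbOn (bdry T) P)
    (x : List ℕ) (hx : x ∈ T) : 0 < mass T P x := by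
  obtain ⟨v, hv⟩ := cone_nonempty' T hT hG x hx
  exact (summable_sub T P hP (cone T x) (fun v hv => hv.1)).tsum_pos
    (fun c => (hP.1 _ c.2.1).le) ⟨v, hv⟩ (hP.1 _ hv.1)

lemma mass_leaf (T : Set (List ℕ)) (hT : IsTree T) (P : List ℕ → ℝ) (v : List ℕ)
    (hv : v ∈ bdry T) : mass T P v = P v := by
  have : cone T v = {v} := by
    ext w
    constructor
    · rintro ⟨hw, h⟩
      exact leaf_prefix T hT hv hw.1 h
    · rintro rfl
      exact ⟨hv, List.prefix_refl _⟩
  rw [mass, this]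
  simp

lemma mass_root (T : Set (List ℕ)) (P : List ℕ → ℝ) (hP : IsProbOn (bdry T) P) :
    mass T P [] = 1 := by
  have : cone T [] = bdry T := by
    ext w; simp [cone]
  rw [mass, this]
  exact hP.2.tsum_eq

/-- index of triples (interior node, successor, leaf below the successor) -/
abbrev IdxB (T : Set (List ℕ)) := Σ x : intr T, Σ y : succs T x, cone T y

abbrev IdxA (T : Set (List ℕ)) := Σ v : bdry T, Fin v.1.length

lemma succ_len {T : Set (List ℕ)} {x y : List ℕ} (hy : y ∈ succs T x) :
    y.length = x.length + 1 ∧ x <+: y := by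
  obtain ⟨_, n, rfl⟩ := hy
  simp

def eBA (T : Set (List ℕ)) (b : IdxB T) : IdxA T :=
  ⟨⟨b.2.2.1, b.2.2.2.1⟩, ⟨b.1.1.length, by
    have h1 := succ_len b.2.1.2
    have h2 := b.2.2.2.2.length_le
    simp only
    omega⟩⟩

lemma eBA_bij (T : Set (List ℕ)) (hT : IsTree T) : Function.Bijective (eBA T) := by
  constructor
  · rintro ⟨⟨x, hx⟩, ⟨y, hy⟩, ⟨v, hv⟩⟩ ⟨⟨x', hx'⟩, ⟨y', hy'⟩, ⟨v', hv'⟩⟩ h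
    have e1 : v = v' := congrArg (fun a : IdxA T => a.1.1) h
    have e2 : x.length = x'.length := congrArg (fun a : IdxA T => (a.2 : ℕ)) h
    obtain ⟨l1, p1⟩ := succ_len hy
    obtain ⟨l2, p2⟩ := succ_len hy'
    simp only at l1 l2 p1 p2
    subst e1
    have ey : y = y' := by
      have q1 : y = v.take y.length := List.prefix_iff_eq_take.mp hv.2
      have q2 : y' = v.take y'.length := List.prefix_iff_eq_take.mp hv'.2
      rw [q1, q2, l1, l2, e2]
    subst ey
    have ex : x = x' := by
      rw [List.prefix_iff_eq_take.mp p1, List.prefix_iff_eq_take.mp p2, e2]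
    subst ex
    rfl
  · rintro ⟨⟨v, hv⟩, ⟨i, hi⟩⟩
    simp only at hi
    have hy : v.take (i + 1) ∈ succs T (v.take i) :=
      ⟨hT.2 _ hv.1 _ (List.take_prefix _ _), v[i], by simp⟩
    have hx : v.take i ∈ intr T := by
      refine ⟨hT.2 _ hv.1 _ (List.take_prefix _ _), fun h => ?_⟩
      rw [h.2] at hy
      exact hy
    refine ⟨⟨⟨_, hx⟩, ⟨_, hy⟩, ⟨v, hv, List.take_prefix _ _⟩⟩, ?_⟩
    refine Sigma.ext rfl (heq_of_eq (Fin.ext ?_))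
    simp [eBA]
    omega

/-- the summand -/
def FA (T : Set (List ℕ)) (P : List ℕ → ℝ) (a : IdxA T) : ℝ :=
  P a.1 * Real.logb 2 (mass T P (a.1.1.take a.2) / mass T P (a.1.1.take (a.2 + 1)))

/-- Entropy interchange formula: if `H(P)` is finite then all local entropies are finite and
`H(P)/ℓ(P) = ∑_{x ∈ interior T} μ_P(x)·H_p(x)/ℓ(x)`. -/
theorem entropy_interchange
    (T : Set (List ℕ)) (hT : IsTree T) (hU : NoUnary T) (hG : NoInfGeo T)
    (hB : (bdry T).Nonempty) (hroot : ([] : List ℕ) ∈ intr T)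
    (ℓ : List ℕ → ℝ) (hℓ : ∀ x ∈ intr T, 0 < ℓ x)
    (P : List ℕ → ℝ) (hP : IsProbOn (bdry T) P)
    (hlen : Summable fun v : bdry T => lenWt ℓ v * P v)
    (hH : Summable fun v : bdry T => phi (P v)) :
    (∀ x ∈ intr T, Summable fun y : succs T x => phi (fwd T P x y)) ∧
    (∑' v : bdry T, phi (P v)) / expLen T ℓ P
      = ∑' x : intr T, nodeAvg T ℓ P x * (Hloc T P x / ℓ x) := by
  have hpos := mass_pos T hT hG P hP
  have hFnn : ∀ a, 0 ≤ FA T P a := by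
    rintro ⟨⟨v, hv⟩, i⟩
    have hm := hpos _ (hT.2 _ hv.1 _ (List.take_prefix (i + 1) v))
    refine mul_nonneg (hP.1 _ hv).le (Real.logb_nonneg (by norm_num) ?_)
    rw [one_le_div hm]
    apply mass_anti T P hP
    simp only
    exact List.take_prefix_take_left (by omega)
  have hin : ∀ v : bdry T, ∑ i : Fin v.1.length, FA T P ⟨v, i⟩ = phi (P v) := by
    rintro ⟨v, hv⟩
    simp only [FA]
    rw [← Finset.mul_sum, phi]
    congr 1
    rw [Fin.sum_univ_eq_sum_range
      (fun i => Real.logb 2 (mass T P (v.take i) / mass T P (v.take (i + 1))))]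
    have : ∀ i ∈ Finset.range v.length,
        Real.logb 2 (mass T P (v.take i) / mass T P (v.take (i + 1)))
        = Real.logb 2 (mass T P (v.take i)) - Real.logb 2 (mass T P (v.take (i + 1))) := by
      intro i _
      exact Real.logb_div (hpos _ (hT.2 _ hv.1 _ (List.take_prefix _ v))).ne'
        (hpos _ (hT.2 _ hv.1 _ (List.take_prefix _ v))).ne'
    rw [Finset.sum_congr rfl this,
      Finset.sum_range_sub' (fun i => Real.logb 2 (mass T P (v.take i)))]
    simp [mass_root T P hP, mass_leaf T hT P v hv]
  have hsA : Summable (FA T P) := by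
    rw [summable_sigma_of_nonneg hFnn]
    refine ⟨fun v => (hasSum_fintype _).summable, ?_⟩
    simpa only [tsum_fintype, hin] using hH
  have hA : ∑' a, FA T P a = ∑' v : bdry T, phi (P v) := by
    rw [hsA.tsum_sigma' (fun v => (hasSum_fintype _).summable)]
    simp only [tsum_fintype, hin]
  let e := Equiv.ofBijective (eBA T) (eBA_bij T hT)
  have hsB : Summable (fun b : IdxB T => FA T P (eBA T b)) := e.summable_iff.mpr hsA
  have hB' : ∑' b : IdxB T, FA T P (eBA T b) = ∑' v : bdry T, phi (P v) := by
    rw [← hA]; exact e.tsum_eq (FA T P)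
  have hFB : ∀ (x : intr T) (y : succs T x) (v : cone T y),
      FA T P (eBA T ⟨x, y, v⟩) = P v * Real.logb 2 (mass T P x / mass T P y) := by
    rintro ⟨x, hx⟩ ⟨y, hy⟩ ⟨v, hv⟩
    obtain ⟨l1, p1⟩ := succ_len hy
    simp only at l1 p1
    have e1 := List.prefix_iff_eq_take.mp hv.2
    have e2 := List.prefix_iff_eq_take.mp (p1.trans hv.2)
    simp only at e1 e2
    rw [l1] at e1
    simp only [FA, eBA]
    rw [← e1, ← e2]
  have hinner : ∀ (x : intr T) (y : succs T x),
      ∑' v : cone T y, FA T P (eBA T ⟨x, y, v⟩) = mass T P x * phi (fwd T P x y) := by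
    intro x y
    have hx := hpos _ x.2.1
    have hy := hpos _ y.2.1
    simp only [hFB]
    rw [tsum_mul_right, phi, fwd, one_div_div, ← mul_assoc, mul_div_cancel₀ _ hx.ne']
    rfl
  have hs1 : ∀ x : intr T, Summable fun y : succs T x => mass T P x * phi (fwd T P x y) := by
    intro x
    have := (hsB.sigma_factor x).sigma
    simpa only [hinner] using this
  refine ⟨fun x hx => ?_, ?_⟩
  · exact (summable_mul_left_iff (hpos x hx.1).ne').mp (hs1 ⟨x, hx⟩)
  · rw [← hB', hsB.tsum_sigma, ← tsum_div_const]
    refine tsum_congr fun x => ?_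
    rw [(hsB.sigma_factor x).tsum_sigma]
    simp only [hinner]
    rw [tsum_mul_left, nodeAvg, Hloc]
    have := hℓ x x.2
    field_simp
end
end

section
/- Stochastic domination with finite mean implies uniform summability of entropies: Let I be a set and for each i ∈ I let p_i : {1,2,3,…} → ℝ be a probability distribution (p_i(n) ≥ 0, ∑_{n≥1} p_i(n) = 1). Define the tails τ_i(k) = ∑_{n≥k} p_i(n) and τ(k) = sup_{i∈I} τ_i(k). Assume τ(k) → 0 as k → ∞ and that the dominating distribution p(n) = τ(n) − τ(n+1) has finite mean, i.e. ∑_{n≥1} n·p(n) < ∞. Then the entropies of the p_i are uniformly summable: for every ε > 0 there is m ∈ ℕ such that for every i ∈ I, ∑_{n≥m} φ(p_i(n)) < ε, where φ(t) = t·log₂(1/t) with φ(0) = 0. -/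
open Filter

noncomputable section

/-- The tail `τ_i(k) = ∑_{n ≥ k} p_i(n)` of the `i`-th distribution. -/
def tailOf {I : Type*} (p : I → ℕ → ℝ) (i : I) (k : ℕ) : ℝ :=
  ∑' n : ℕ, p i (k + n)

/-- `τ(k) = sup_i τ_i(k)`. -/
def tailSup {I : Type*} (p : I → ℕ → ℝ) (k : ℕ) : ℝ :=
  ⨆ i, tailOf p i k

lemma phi_bound {t : ℝ} (ht : 0 ≤ t) (a : ℝ) :
    phi t ≤ (a * t + Real.exp (-a)) / Real.log 2 := by
  have h2 : 0 < Real.log 2 := Real.log_pos (by norm_num)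
  unfold phi Real.logb
  rw [← mul_div_assoc]
  refine div_le_div_of_nonneg_right ?_ h2.le
  rcases ht.eq_or_lt with rfl | h
  · simp; positivity
  · have h1 := Real.log_le_sub_one_of_pos (div_pos (Real.exp_pos (-a)) h)
    rw [Real.log_div (Real.exp_pos _).ne' h.ne', Real.log_exp] at h1
    rw [one_div, Real.log_inv]
    have h3 := mul_le_mul_of_nonneg_left h1 h.le
    have h4 : t * (Real.exp (-a) / t - 1) = Real.exp (-a) - t := by field_simp
    rw [h4] at h3
    linarith

lemma phi_nonneg_aux {t : ℝ} (ht : 0 ≤ t) (h1 : t ≤ 1) : 0 ≤ phi t := by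
  unfold phi
  rcases ht.eq_or_lt with rfl | h
  · simp
  · exact mul_nonneg ht (Real.logb_nonneg (by norm_num) (by rw [le_div_iff₀ h]; linarith))

lemma abel_aux (t : ℕ → ℝ) (m N : ℕ) :
    ∑ j ∈ Finset.range N, ((m + j : ℕ) : ℝ) * (t (m + j) - t (m + j + 1))
      + ((m + N : ℕ) : ℝ) * t (m + N)
      = m * t m + ∑ j ∈ Finset.range N, t (m + j + 1) := by
  induction N with
  | zero => simp
  | succ N ih =>
    rw [Finset.sum_range_succ, Finset.sum_range_succ, ← add_assoc m N 1]
    push_cast at ih ⊢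
    linarith

lemma tail_bound (t : ℕ → ℝ) (hanti : Antitone t) (h0 : Tendsto t atTop (nhds 0))
    (hs : Summable fun n : ℕ => (n : ℝ) * (t n - t (n + 1))) (K : ℕ) :
    K * t K ≤ ∑' j : ℕ, ((K + j : ℕ) : ℝ) * (t (K + j) - t (K + j + 1)) := by
  have hs' : Summable fun j : ℕ => ((K + j : ℕ) : ℝ) * (t (K + j) - t (K + j + 1)) := by
    have := (summable_nat_add_iff K).2 hs
    simpa [add_comm K] using this
  have hlim : Tendsto (fun N => (K : ℝ) * (t K - t (K + N))) atTop (nhds (K * (t K - 0))) := by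
    refine Tendsto.const_mul _ (tendsto_const_nhds.sub ?_)
    have := (tendsto_add_atTop_iff_nat K).2 h0
    simpa [add_comm K] using this
  rw [sub_zero] at hlim
  refine le_of_tendsto' hlim fun N => ?_
  refine le_trans ?_ (hs'.sum_le_tsum (Finset.range N) fun j _ =>
    mul_nonneg (Nat.cast_nonneg _) (sub_nonneg.2 (hanti (Nat.le_succ _))))
  have h1 : t K - t (K + N) = ∑ j ∈ Finset.range N, (t (K + j) - t (K + j + 1)) := by
    have := Finset.sum_range_sub' (fun j => t (K + j)) N
    simpa [add_assoc] using this.symm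
  rw [h1, Finset.mul_sum]
  refine Finset.sum_le_sum fun j _ => ?_
  refine mul_le_mul_of_nonneg_right ?_ (sub_nonneg.2 (hanti (Nat.le_succ _)))
  push_cast
  linarith [Nat.cast_nonneg (α := ℝ) j]

lemma partial_bound (s t : ℕ → ℝ) (hs0 : ∀ n, 0 ≤ s n) (hst : ∀ n, s n ≤ t n)
    (hanti : Antitone t) (h0 : Tendsto t atTop (nhds 0))
    (hs : Summable fun n : ℕ => (n : ℝ) * (t n - t (n + 1))) (m N : ℕ) :
    ∑ j ∈ Finset.range N, ((m + j : ℕ) : ℝ) * (s (m + j) - s (m + j + 1)) ≤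
    ∑' j : ℕ, ((m + j : ℕ) : ℝ) * (t (m + j) - t (m + j + 1)) := by
  have hs' : Summable fun j : ℕ => ((m + j : ℕ) : ℝ) * (t (m + j) - t (m + j + 1)) := by
    have := (summable_nat_add_iff m).2 hs
    simpa [add_comm m] using this
  have h1 := abel_aux s m N
  have h2 := abel_aux t m N
  have h3 := tail_bound t hanti h0 hs (m + N)
  have h4 := hs'.sum_add_tsum_nat_add N
  have h5 : (∑' j : ℕ, ((m + (j + N) : ℕ) : ℝ) * (t (m + (j + N)) - t (m + (j + N) + 1)))
     = ∑' j : ℕ, ((m + N + j : ℕ) : ℝ) * (t (m + N + j) - t (m + N + j + 1)) := by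
    refine tsum_congr fun j => ?_
    rw [show m + (j + N) = m + N + j by ring]
  rw [h5] at h4
  have h6 : (m : ℝ) * s m ≤ m * t m := mul_le_mul_of_nonneg_left (hst m) (Nat.cast_nonneg _)
  have h7 : ∑ j ∈ Finset.range N, s (m + j + 1) ≤ ∑ j ∈ Finset.range N, t (m + j + 1) :=
    Finset.sum_le_sum fun j _ => hst _
  have h8 : 0 ≤ ((m + N : ℕ) : ℝ) * s (m + N) := mul_nonneg (Nat.cast_nonneg _) (hs0 _)
  linarith

/-- Stochastic domination with finite mean implies uniform summability of the entropies:
if the tails `τ_i(k)` are uniformly small and the dominating distribution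
`p(n) = τ(n) − τ(n+1)` has finite mean, then for every `ε > 0` there is `m` such that
`∑_{n ≥ m} φ(p_i(n)) < ε` for every `i`. -/
theorem unif_summable_entropy_of_domination
    {I : Type*} [Nonempty I] (p : I → ℕ → ℝ)
    (hpos : ∀ i n, 0 ≤ p i n) (hzero : ∀ i, p i 0 = 0)
    (hprob : ∀ i, HasSum (p i) 1)
    (htail : Tendsto (fun k => tailSup p k) atTop (nhds 0))
    (hmean : Summable fun n : ℕ => (n : ℝ) * (tailSup p n - tailSup p (n + 1))) :
    ∀ ε : ℝ, 0 < ε → ∃ m : ℕ, ∀ i : I,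
      (Summable fun n : ℕ => phi (p i (m + n))) ∧
      (∑' n : ℕ, phi (p i (m + n))) < ε := by
  have hsum : ∀ i k, Summable fun n => p i (k + n) := fun i k => by
    have := (summable_nat_add_iff k).2 (hprob i).summable
    simpa [add_comm k] using this
  have hdiff : ∀ i k, tailOf p i k - tailOf p i (k + 1) = p i k := fun i k => by
    have := (hsum i k).tsum_eq_zero_add
    unfold tailOf
    rw [this]
    have h2 : (∑' n, p i (k + (n + 1))) = ∑' n, p i (k + 1 + n) :=
      tsum_congr fun n => by rw [show k + (n + 1) = k + 1 + n by ring]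
    rw [h2, add_zero, add_sub_cancel_right]
  have hs0 : ∀ i k, 0 ≤ tailOf p i k := fun i k => tsum_nonneg fun n => hpos i _
  have hsanti : ∀ i, Antitone (tailOf p i) := fun i =>
    antitone_nat_of_succ_le fun k => by linarith [hdiff i k, hpos i k]
  have hs1 : ∀ i k, tailOf p i k ≤ 1 := fun i k => by
    refine (hsanti i (Nat.zero_le k)).trans ?_
    simp [tailOf, (hprob i).tsum_eq]
  have hbdd : ∀ k, BddAbove (Set.range fun i => tailOf p i k) := fun k =>
    ⟨1, by rintro _ ⟨i, rfl⟩; exact hs1 i k⟩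
  have hst : ∀ i k, tailOf p i k ≤ tailSup p k := fun i k => le_ciSup (hbdd k) i
  have hanti : Antitone (tailSup p) := fun a b hab =>
    ciSup_mono (hbdd a) fun i => hsanti i hab
  have hp1 : ∀ i n, p i n ≤ 1 := fun i n => by linarith [hdiff i n, hs1 i n, hs0 i (n + 1)]
  have hl2 : 0 < Real.log 2 := Real.log_pos (by norm_num)
  have hexp : Summable fun n : ℕ => Real.exp (-(n : ℝ)) := Real.summable_exp_neg_nat
  intro ε hε
  have hlim := (tendsto_sum_nat_add fun n : ℕ => (n : ℝ) * (tailSup p n - tailSup p (n + 1))).add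
    (tendsto_sum_nat_add fun n : ℕ => Real.exp (-(n : ℝ)))
  rw [add_zero] at hlim
  obtain ⟨m, hm⟩ := (hlim.eventually (gt_mem_nhds (mul_pos hε hl2))).exists
  refine ⟨m, fun i => ?_⟩
  simp only [add_comm _ m] at hm
  have hexp' : Summable fun j : ℕ => Real.exp (-((m + j : ℕ) : ℝ)) := by
    have := (summable_nat_add_iff m).2 hexp
    simpa only [add_comm _ m] using this
  have hpart := partial_bound (tailOf p i) (tailSup p) (hs0 i) (hst i) hanti htail hmean m
  simp only [hdiff] at hpart
  have hnn : ∀ j : ℕ, 0 ≤ ((m + j : ℕ) : ℝ) * p i (m + j) := fun j =>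
    mul_nonneg (Nat.cast_nonneg _) (hpos i _)
  have hS : Summable fun j : ℕ => ((m + j : ℕ) : ℝ) * p i (m + j) :=
    summable_of_sum_range_le hnn hpart
  have hT := Real.tsum_le_of_sum_range_le hnn hpart
  have hB : Summable fun j : ℕ =>
      (((m + j : ℕ) : ℝ) * p i (m + j) + Real.exp (-((m + j : ℕ) : ℝ))) / Real.log 2 :=
    (hS.add hexp').div_const _
  have hle : ∀ j, phi (p i (m + j)) ≤
      (((m + j : ℕ) : ℝ) * p i (m + j) + Real.exp (-((m + j : ℕ) : ℝ))) / Real.log 2 :=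
    fun j => phi_bound (hpos i _) _
  have hphi : Summable fun j : ℕ => phi (p i (m + j)) :=
    Summable.of_nonneg_of_le (fun j => phi_nonneg_aux (hpos i _) (hp1 i _)) hle hB
  refine ⟨hphi, (hphi.tsum_le_tsum hle hB).trans_lt ?_⟩
  rw [tsum_div_const, hS.tsum_add hexp', div_lt_iff₀ hl2]
  linarith
end
end

section
/- Local entropy comparison lemma: Let p and q be probability distributions on a countable set Y whose entropies ∑_{y} φ(p(y)) and ∑_{y} φ(q(y)) are finite, where φ(t) = t·log₂(1/t), φ(0) = 0. Suppose ε > 0 and there is a finite subset F ⊆ Y with |F| ≤ M such that ∑_{y ∈ Y\F} φ(p(y)) < ε and ∑_{y ∈ Y\F} φ(q(y)) < ε. Then for every δ with 0 < δ ≤ 1/2, |∑_{y} φ(p(y)) − ∑_{y} φ(q(y))| ≤ 2ε + M·φ(δ) + (2/(e·ln 2))·(1/δ)·∑_{y∈Y} |p(y) − q(y)|. -/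
noncomputable section

open Real in
lemma eta_le (t : ℝ) (ht : 0 ≤ t) : negMulLog t ≤ 1 / exp 1 := by
  rcases ht.eq_or_lt with h | h
  · rw [← h]; simp; positivity
  · have h1 := log_le_sub_one_of_pos (show 0 < 1 / (exp 1 * t) by positivity)
    rw [one_div, log_inv, log_mul (by positivity) h.ne', log_exp] at h1
    have h2 : - log t ≤ (exp 1 * t)⁻¹ := by linarith
    have h3 := mul_le_mul_of_nonneg_left h2 h.le
    have h4 : t * (exp 1 * t)⁻¹ = 1 / exp 1 := by field_simp
    rw [negMulLog]; linarith

open Real in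
lemma eta_half (d δ : ℝ) (hd : 0 < d) (h : d ≤ δ / 2) (hδ : δ ≤ 1/2) :
    negMulLog d ≤ negMulLog δ := by
  have hδ0 : 0 < δ := by linarith
  have h1 : log (δ / (2 * d)) ≤ δ / (2 * d) - 1 := log_le_sub_one_of_pos (by positivity)
  rw [log_div hδ0.ne' (by positivity), log_mul (by norm_num) hd.ne'] at h1
  have h2 : log δ ≤ - log 2 := by
    rw [← log_inv]; exact log_le_log hδ0 (by linarith)
  have h3 := mul_le_mul_of_nonneg_left h1 hd.le
  have h4 : d * (δ / (2 * d) - 1) = δ / 2 - d := by field_simp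
  rw [h4] at h3
  have h5 := log_two_gt_d9
  have h6 : (δ - d) * log δ ≤ (δ - d) * (- log 2) :=
    mul_le_mul_of_nonneg_left h2 (by linarith)
  have h7 : 0 ≤ (δ - 2 * d) * (log 2 - 1 / 2) := mul_nonneg (by linarith) (by linarith)
  rw [negMulLog, negMulLog]; nlinarith

open Real in
lemma eta_diff (a d : ℝ) (ha : 0 ≤ a) (hd : 0 < d) (had : a + d ≤ 1) (h : d ≤ 1 / 4) :
    |negMulLog (a + d) - negMulLog a| ≤ negMulLog d := by
  rcases ha.eq_or_lt with h0 | h0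
  · rw [← h0]; simp
    rw [abs_of_nonneg (negMulLog_nonneg hd.le (by linarith))]
  · have e1 : log a ≤ log (a + d) := log_le_log h0 (by linarith)
    have e2 : log d ≤ log (a + d) := log_le_log hd (by linarith)
    have e3 : log (a + d) ≤ 0 := log_nonpos (by linarith) had
    have e4 : log ((a + d) / a) ≤ (a + d) / a - 1 := log_le_sub_one_of_pos (by positivity)
    rw [log_div (by positivity) h0.ne'] at e4
    have e5 := mul_le_mul_of_nonneg_left e4 h0.le
    have e6 : a * ((a + d) / a - 1) = d := by field_simp; ring
    rw [e6] at e5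
    have e7 : log d ≤ -1 := by
      have : log d ≤ log (((2:ℝ)^2)⁻¹) := log_le_log hd (by linarith)
      rw [log_inv, log_pow] at this
      have := log_two_gt_d9
      push_cast at *; linarith
    have m1 := mul_le_mul_of_nonneg_left e1 h0.le
    have m2 := mul_le_mul_of_nonneg_left e2 hd.le
    have m3 := mul_le_mul_of_nonneg_left e3 hd.le
    have m7 := mul_le_mul_of_nonneg_left e7 hd.le
    simp only [negMulLog]
    rw [abs_le]; constructor <;> nlinarith

open Real in
lemma eta_ptw (a b δ : ℝ) (ha : 0 ≤ a) (hab : a ≤ b) (hb : b ≤ 1) (h0 : 0 < δ) (hδ : δ ≤ 1/2) :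
    |negMulLog b - negMulLog a| ≤ negMulLog δ + 2 / exp 1 * (1 / δ) * (b - a) := by
  have hn := negMulLog_nonneg h0.le (by linarith)
  have hC : 0 ≤ 2 / exp 1 * (1 / δ) := by positivity
  rcases hab.eq_or_lt with h | h
  · subst h; simpa using hn
  by_cases hd : b - a ≤ δ / 2
  · have h1 := eta_diff a (b - a) ha (by linarith) (by linarith) (by linarith)
    have h2 := eta_half (b - a) δ (by linarith) hd hδ
    rw [add_sub_cancel] at h1
    have := mul_nonneg hC (show 0 ≤ b - a by linarith)
    linarith
  · have h1 := mul_le_mul_of_nonneg_left (not_le.1 hd).le hC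
    have h2 : 2 / exp 1 * (1 / δ) * (δ / 2) = 1 / exp 1 := by field_simp
    have := eta_le a ha
    have := eta_le b (by linarith)
    have := negMulLog_nonneg ha (by linarith)
    have := negMulLog_nonneg (by linarith : 0 ≤ b) hb
    rw [abs_le]; constructor <;> linarith

lemma phi_eq (t : ℝ) : phi t = Real.negMulLog t / Real.log 2 := by
  rw [phi, Real.negMulLog, one_div, Real.logb, Real.log_inv]; ring

lemma phi_nonneg' (t : ℝ) (h : 0 ≤ t) (h1 : t ≤ 1) : 0 ≤ phi t := by
  rw [phi_eq]
  exact div_nonneg (Real.negMulLog_nonneg h h1) (Real.log_nonneg (by norm_num))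

lemma phi_ptw (a b δ : ℝ) (ha : 0 ≤ a) (ha1 : a ≤ 1) (hb0 : 0 ≤ b) (hb : b ≤ 1)
    (h0 : 0 < δ) (hδ : δ ≤ 1/2) :
    |phi a - phi b| ≤ phi δ + (2 / (Real.exp 1 * Real.log 2)) * (1 / δ) * |a - b| := by
  wlog hab : a ≤ b generalizing a b
  · rw [abs_sub_comm, abs_sub_comm a]
    exact this b a hb0 hb ha ha1 (by linarith)
  have h := eta_ptw a b δ ha hab hb h0 hδ
  have hl : 0 < Real.log 2 := Real.log_pos (by norm_num)
  rw [abs_sub_comm, abs_sub_comm a, abs_of_nonneg (sub_nonneg.2 hab), phi_eq, phi_eq, phi_eq,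
    ← sub_div, abs_div, abs_of_pos hl, div_le_iff₀ hl]
  refine h.trans (le_of_eq ?_)
  field_simp

/-- Local entropy comparison lemma: for probability distributions `p`, `q` on a countable set
with finite entropies and common tightness witness `F` (with `|F| ≤ M`, tail entropies `< ε`),
for every `0 < δ ≤ 1/2`,
`|H(p) − H(q)| ≤ 2ε + M·φ(δ) + (2/(e·ln 2))·(1/δ)·‖p − q‖₁`. -/
theorem local_entropy_comparison
    {Y : Type*} [Countable Y] (p q : Y → ℝ)
    (hp0 : ∀ y, 0 ≤ p y) (hp1 : HasSum p 1)
    (hq0 : ∀ y, 0 ≤ q y) (hq1 : HasSum q 1)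
    (hHp : Summable fun y : Y => phi (p y))
    (hHq : Summable fun y : Y => phi (q y))
    (ε : ℝ) (hε : 0 < ε) (M : ℕ) (F : Finset Y) (hF : F.card ≤ M)
    (htailp : (∑' y : {y : Y // y ∉ F}, phi (p y)) < ε)
    (htailq : (∑' y : {y : Y // y ∉ F}, phi (q y)) < ε)
    (δ : ℝ) (hδ0 : 0 < δ) (hδ : δ ≤ 1/2) :
    |(∑' y : Y, phi (p y)) - ∑' y : Y, phi (q y)|
      ≤ 2 * ε + M * phi δ
        + (2 / (Real.exp 1 * Real.log 2)) * (1 / δ) * ∑' y : Y, |p y - q y| := by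
  have hp1' : ∀ y, p y ≤ 1 := fun y => le_hasSum hp1 y (fun j _ => hp0 j)
  have hq1' : ∀ y, q y ≤ 1 := fun y => le_hasSum hq1 y (fun j _ => hq0 j)
  have sp := hHp.sum_add_tsum_subtype_compl F
  have sq := hHq.sum_add_tsum_subtype_compl F
  have tp : 0 ≤ ∑' y : {y : Y // y ∉ F}, phi (p y) :=
    tsum_nonneg fun y => phi_nonneg' _ (hp0 _) (hp1' _)
  have tq : 0 ≤ ∑' y : {y : Y // y ∉ F}, phi (q y) :=
    tsum_nonneg fun y => phi_nonneg' _ (hq0 _) (hq1' _)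
  have hs : Summable fun y => |p y - q y| := (hp1.summable.sub hq1.summable).abs
  have hl : 0 < Real.log 2 := Real.log_pos (by norm_num)
  have hC : 0 ≤ (2 / (Real.exp 1 * Real.log 2)) * (1 / δ) := by positivity
  have hle := mul_le_mul_of_nonneg_left
    (hs.sum_le_tsum F (fun y _ => abs_nonneg (p y - q y))) hC
  have hM : (F.card : ℝ) * phi δ ≤ M * phi δ :=
    mul_le_mul_of_nonneg_right (by exact_mod_cast hF) (phi_nonneg' _ hδ0.le (by linarith))
  have key : |∑ y ∈ F, phi (p y) - ∑ y ∈ F, phi (q y)| ≤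
      F.card * phi δ + (2 / (Real.exp 1 * Real.log 2)) * (1 / δ) * ∑ y ∈ F, |p y - q y| := by
    rw [← Finset.sum_sub_distrib, Finset.mul_sum, ← nsmul_eq_mul, ← Finset.sum_const,
      ← Finset.sum_add_distrib]
    exact (Finset.abs_sum_le_sum_abs _ _).trans (Finset.sum_le_sum fun y _ =>
      phi_ptw _ _ δ (hp0 y) (hp1' y) (hq0 y) (hq1' y) hδ0 hδ)
  rw [abs_le] at key ⊢
  rw [← sp, ← sq]
  constructor <;> linarith [key.1, key.2]
end
end

section
/- Indispensability of the variational-distance term: Let d₁, d₂ ≥ 2 be integers and θ ∈ (0,1). For n ≥ 1, on X_n = Fin(d₁^n) ⊕ Fin(d₂^n) let P_n give mass θ/d₁^n to each element of the first summand and (1−θ)/d₂^n to each of the second, and let Q_n be the analogous distribution with parameter 1/2. Then, as n → ∞, D(P_n‖Q_n)/n → 0, while |H(P_n)/n − H(Q_n)/n| → |θ − 1/2|·|log₂ d₁ − log₂ d₂|; in particular, if θ ≠ 1/2 and d₁ ≠ d₂ the latter limit is nonzero. -/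
open Filter

noncomputable section

/-- The two-branch distribution on `Fin (d₁^n) ⊕ Fin (d₂^n)`: mass `θ/d₁^n` on each element of
the first summand and `(1−θ)/d₂^n` on each element of the second. -/
def twoBranch (d₁ d₂ n : ℕ) (θ : ℝ) : Fin (d₁ ^ n) ⊕ Fin (d₂ ^ n) → ℝ :=
  Sum.elim (fun _ => θ / (d₁ : ℝ) ^ n) (fun _ => (1 - θ) / (d₂ : ℝ) ^ n)

/-- The entropy `H(ν) = ∑_{x∈X} φ(ν(x))` of a distribution on a finite set. -/
def entOf {X : Type*} [Fintype X] (ν : X → ℝ) : ℝ := ∑ x : X, phi (ν x)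

/-- The Kullback–Leibler divergence `D(ν₁‖ν₂) = ∑_{x∈X} ν₁(x)·log₂(ν₁(x)/ν₂(x))`. -/
def klOf {X : Type*} [Fintype X] (ν₁ ν₂ : X → ℝ) : ℝ :=
  ∑ x : X, ν₁ x * Real.logb 2 (ν₁ x / ν₂ x)

lemma ent_eq (d₁ d₂ n : ℕ) (hd₁ : 2 ≤ d₁) (hd₂ : 2 ≤ d₂) (θ : ℝ) (h0 : 0 < θ) (h1 : θ < 1) :
    entOf (twoBranch d₁ d₂ n θ) = (phi θ + phi (1 - θ)) +
      n * (θ * Real.logb 2 d₁ + (1 - θ) * Real.logb 2 d₂) := by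
  have key : ∀ (d : ℕ) (t : ℝ), 2 ≤ d → 0 < t →
      (d : ℝ) ^ n * phi (t / (d : ℝ) ^ n) = phi t + n * (t * Real.logb 2 d) := by
    intro d t hd ht
    have hd0 : (0 : ℝ) < d := by exact_mod_cast (by omega : 0 < d)
    have hp : (0 : ℝ) < (d : ℝ) ^ n := pow_pos hd0 n
    unfold phi
    rw [one_div_div, Real.logb_div hp.ne' ht.ne', Real.logb_div one_ne_zero ht.ne',
      Real.logb_pow, Real.logb_one]
    field_simp
    ring
  have e1 := key d₁ θ hd₁ h0
  have e2 := key d₂ (1 - θ) hd₂ (by linarith)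
  simp only [entOf, twoBranch, Fintype.sum_sum_type, Sum.elim_inl, Sum.elim_inr,
    Finset.sum_const, Finset.card_univ, Fintype.card_fin, nsmul_eq_mul, Nat.cast_pow]
  rw [e1, e2]
  ring

lemma kl_eq (d₁ d₂ n : ℕ) (hd₁ : 2 ≤ d₁) (hd₂ : 2 ≤ d₂) (θ : ℝ) :
    klOf (twoBranch d₁ d₂ n θ) (twoBranch d₁ d₂ n (1/2)) =
      θ * Real.logb 2 (θ / (1/2)) + (1 - θ) * Real.logb 2 ((1 - θ) / (1 - 1/2)) := by
  have key : ∀ (d : ℕ) (t s : ℝ), 2 ≤ d →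
      (d : ℝ) ^ n * (t / (d : ℝ) ^ n * Real.logb 2 (t / (d : ℝ) ^ n / (s / (d : ℝ) ^ n)))
        = t * Real.logb 2 (t / s) := by
    intro d t s hd
    have hd0 : (0 : ℝ) < d := by exact_mod_cast (by omega : 0 < d)
    have hp : (0 : ℝ) < (d : ℝ) ^ n := pow_pos hd0 n
    rw [div_div_div_cancel_right₀ hp.ne', ← mul_assoc, mul_div_cancel₀ _ hp.ne']
  simp only [klOf, twoBranch, Fintype.sum_sum_type, Sum.elim_inl, Sum.elim_inr,
    Finset.sum_const, Finset.card_univ, Fintype.card_fin, nsmul_eq_mul, Nat.cast_pow]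
  rw [key d₁ _ _ hd₁, key d₂ _ _ hd₂]

/-- Indispensability of the variational-distance term: as `n → ∞`,
`D(P_n‖Q_n)/n → 0` while `|H(P_n)/n − H(Q_n)/n| → |θ − 1/2|·|log₂ d₁ − log₂ d₂|`,
which is nonzero when `θ ≠ 1/2` and `d₁ ≠ d₂`. -/
theorem variational_term_indispensable (d₁ d₂ : ℕ) (hd₁ : 2 ≤ d₁) (hd₂ : 2 ≤ d₂)
    (θ : ℝ) (hθ0 : 0 < θ) (hθ1 : θ < 1) :
    Tendsto (fun n : ℕ =>
        klOf (twoBranch d₁ d₂ n θ) (twoBranch d₁ d₂ n (1/2)) / n) atTop (nhds 0) ∧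
    Tendsto (fun n : ℕ =>
        |entOf (twoBranch d₁ d₂ n θ) / n - entOf (twoBranch d₁ d₂ n (1/2)) / n|)
      atTop (nhds (|θ - 1/2| * |Real.logb 2 d₁ - Real.logb 2 d₂|)) ∧
    (θ ≠ 1/2 → d₁ ≠ d₂ → |θ - 1/2| * |Real.logb 2 d₁ - Real.logb 2 d₂| ≠ 0) := by
  refine ⟨?_, ?_, ?_⟩
  · simp only [kl_eq d₁ d₂ _ hd₁ hd₂ θ]
    exact tendsto_const_div_atTop_nhds_zero_nat _
  · rw [← abs_mul]
    refine Tendsto.abs ?_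
    have h := (tendsto_const_div_atTop_nhds_zero_nat
      ((phi θ + phi (1 - θ)) - (phi (1/2) + phi (1 - 1/2)))).add_const
        ((θ - 1/2) * (Real.logb 2 d₁ - Real.logb 2 d₂))
    rw [zero_add] at h
    refine h.congr' ?_
    filter_upwards [eventually_gt_atTop 0] with n hn
    have hn' : (n : ℝ) ≠ 0 := by exact_mod_cast hn.ne'
    rw [ent_eq d₁ d₂ n hd₁ hd₂ θ hθ0 hθ1,
      ent_eq d₁ d₂ n hd₁ hd₂ (1/2) (by norm_num) (by norm_num)]
    field_simp
    ring
  · intro hθ hd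
    have p1 : (0 : ℝ) < d₁ := by exact_mod_cast (by omega : 0 < d₁)
    have p2 : (0 : ℝ) < d₂ := by exact_mod_cast (by omega : 0 < d₂)
    refine mul_ne_zero (abs_ne_zero.2 (sub_ne_zero.2 hθ)) (abs_ne_zero.2 (sub_ne_zero.2 ?_))
    intro h
    exact hd (by exact_mod_cast Real.logb_injOn_pos (by norm_num : (1:ℝ) < 2) p1 p2 h)
end
end

section
/- Monotonicity of relative entropy along sections: Let T be a rooted tree (a prefix-closed set of finite lists over ℕ containing the empty list) with no vertex having exactly one successor, and let P and Q be strictly positive unit flows on T. For n ≥ 1 let S(n) = {x ∈ T : |x| = n} ∪ {leaves v of T with |v| < n}, and suppose for each n the series D(P_n‖Q_n) = ∑_{x ∈ S(n)} B_P(x)·log₂(B_P(x)/B_Q(x)) is absolutely convergent. Then n ↦ D(P_n‖Q_n) is monotone nondecreasing. -/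
open scoped BigOperators
open Filter

noncomputable section

/-- A strictly positive unit flow on `T`: positive on `T`, value `1` at the root, and
flow conservation at every non-leaf vertex. It encodes a Borel probability measure on the
boundary (ends and leaves) of `T`. -/
def IsUnitFlow (T : Set (List ℕ)) (B : List ℕ → ℝ) : Prop :=
  (∀ x ∈ T, 0 < B x) ∧ B ([] : List ℕ) = 1 ∧
  ∀ x ∈ T, ¬ IsLeaf T x → HasSum (fun y : succs T x => B y) (B x)

/-- The section `S(n) = {x ∈ T : |x| = n} ∪ {leaves v : |v| < n}`. -/
def secn (T : Set (List ℕ)) (n : ℕ) : Set (List ℕ) :=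
  {x | (x ∈ T ∧ x.length = n) ∨ (IsLeaf T x ∧ x.length < n)}

def fib (T : Set (List ℕ)) (m : ℕ) (x : List ℕ) : Set (List ℕ) :=
  {y | y ∈ secn T (m+1) ∧ y.take m = x}

lemma fib_leaf (T : Set (List ℕ)) (hT : IsTree T) (m : ℕ) (x : List ℕ)
    (hx : x ∈ secn T m) (hl : IsLeaf T x) : fib T m x = {x} := by
  have hxm : x.length ≤ m := by
    rcases hx with h | h
    · exact h.2.le
    · exact h.2.le
  ext y
  simp only [fib, Set.mem_setOf_eq, Set.mem_singleton_iff]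
  constructor
  · rintro ⟨hy, hyx⟩
    rcases hy with ⟨hyT, hlen⟩ | ⟨_, hlen⟩
    · exfalso
      have hd : y = x ++ [y[m]] := by
        rw [← hyx, List.take_append_getElem, List.take_of_length_le hlen.le]
      have : y ∈ succs T x := ⟨hyT, _, hd⟩
      rw [hl.2] at this
      exact this
    · rw [← hyx, List.take_of_length_le (by omega)]
  · rintro rfl
    exact ⟨Or.inr ⟨hl, by omega⟩, List.take_of_length_le hxm⟩

lemma fib_nonleaf (T : Set (List ℕ)) (hT : IsTree T) (m : ℕ) (x : List ℕ)
    (hx : x ∈ secn T m) (hl : ¬ IsLeaf T x) : fib T m x = succs T x := by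
  have hxm : x.length = m := by
    rcases hx with h | h
    · exact h.2
    · exact absurd h.1 hl
  ext y
  simp only [fib, succs, Set.mem_setOf_eq]
  constructor
  · rintro ⟨hy, hyx⟩
    rcases hy with ⟨hyT, hlen⟩ | ⟨hyl, hlen⟩
    · refine ⟨hyT, y[m], ?_⟩
      rw [← hyx, List.take_append_getElem, List.take_of_length_le hlen.le]
    · rw [List.take_of_length_le (by omega)] at hyx
      exact absurd (hyx ▸ hyl) hl
  · rintro ⟨hyT, k, rfl⟩
    refine ⟨Or.inl ⟨hyT, by simp [hxm]⟩, by simp [← hxm]⟩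

lemma fib_hasSum (T : Set (List ℕ)) (hT : IsTree T) (m : ℕ) (x : List ℕ)
    (hx : x ∈ secn T m) (B : List ℕ → ℝ) (hB : IsUnitFlow T B) :
    HasSum (fun y : fib T m x => B y) (B x) := by
  by_cases hl : IsLeaf T x
  · rw [fib_leaf T hT m x hx hl]
    exact hasSum_unique (fun y : ({x} : Set (List ℕ)) => B y)
  · rw [fib_nonleaf T hT m x hx hl]
    refine hB.2.2 x ?_ hl
    rcases hx with h | h
    · exact h.1
    · exact h.1.1

lemma secn_sub (T : Set (List ℕ)) (m : ℕ) (x : List ℕ) (hx : x ∈ secn T m) : x ∈ T := by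
  rcases hx with h | h
  · exact h.1
  · exact h.1.1

lemma take_secn (T : Set (List ℕ)) (hT : IsTree T) (m : ℕ) (y : List ℕ)
    (hy : y ∈ secn T (m+1)) : y.take m ∈ secn T m := by
  have hm := hT.2 y (secn_sub T _ y hy) _ (List.take_prefix m y)
  rcases hy with ⟨h, hl⟩ | ⟨h, hl⟩
  · exact Or.inl ⟨hm, by simp [hl]⟩
  · rw [List.take_of_length_le (by omega)]
    rcases (Nat.lt_succ_iff_lt_or_eq.mp hl) with h' | h'
    · exact Or.inr ⟨h, h'⟩
    · exact Or.inl ⟨h.1, h'⟩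

def fibEquiv (T : Set (List ℕ)) (hT : IsTree T) (m : ℕ) :
    (Σ x : secn T m, fib T m x) ≃ secn T (m+1) where
  toFun p := ⟨p.2.1, p.2.2.1⟩
  invFun y := ⟨⟨y.1.take m, take_secn T hT m y.1 y.2⟩, ⟨y.1, y.2, rfl⟩⟩
  left_inv := by
    rintro ⟨⟨x, hx⟩, ⟨y, hy⟩⟩
    have h : y.take m = x := hy.2
    subst h
    rfl
  right_inv := by
    rintro ⟨y, hy⟩
    rfl

lemma pt_ineq (p q c : ℝ) (hp : 0 < p) (hq : 0 < q) (hc : 0 < c) :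
    p * Real.logb 2 c + (p - q * c) / Real.log 2 ≤ p * Real.logb 2 (p / q) := by
  have h2 : 0 < Real.log 2 := Real.log_pos (by norm_num)
  have h := Real.log_le_sub_one_of_pos (show 0 < c / (p / q) by positivity)
  rw [Real.log_div hc.ne' (by positivity)] at h
  have h' := mul_le_mul_of_nonneg_left h hp.le
  have e : p * (c / (p / q) - 1) = q * c - p := by field_simp
  rw [e] at h'
  unfold Real.logb
  rw [mul_div_assoc', mul_div_assoc', ← add_div]
  gcongr
  linarith

lemma kl_step (T : Set (List ℕ)) (hT : IsTree T)
    (BP BQ : List ℕ → ℝ) (hBP : IsUnitFlow T BP) (hBQ : IsUnitFlow T BQ) (m : ℕ)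
    (h1 : Summable fun x : secn T m => BP x * Real.logb 2 (BP x / BQ x))
    (h2 : Summable fun x : secn T (m+1) => BP x * Real.logb 2 (BP x / BQ x)) :
    (∑' x : secn T m, BP x * Real.logb 2 (BP x / BQ x))
        ≤ ∑' x : secn T (m+1), BP x * Real.logb 2 (BP x / BQ x) := by
  have h3 : Summable fun p : (Σ x : secn T m, fib T m x) =>
      BP p.2 * Real.logb 2 (BP p.2 / BQ p.2) :=
    (fibEquiv T hT m).summable_iff.mpr h2
  have e : (∑' p : (Σ x : secn T m, fib T m x), BP p.2 * Real.logb 2 (BP p.2 / BQ p.2))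
      = ∑' x : secn T (m+1), BP x * Real.logb 2 (BP x / BQ x) :=
    (fibEquiv T hT m).tsum_eq (fun x : secn T (m+1) => BP x * Real.logb 2 (BP x / BQ x))
  rw [← e, h3.tsum_sigma]
  refine h1.tsum_le_tsum ?_ h3.sigma
  rintro ⟨x, hx⟩
  have hxT := secn_sub T m x hx
  have hP := hBP.1 x hxT
  have hQ := hBQ.1 x hxT
  have sP := fib_hasSum T hT m x hx BP hBP
  have sQ := fib_hasSum T hT m x hx BQ hBQ
  have s := (sP.mul_right (Real.logb 2 (BP x / BQ x))).add
    ((sP.sub (sQ.mul_right (BP x / BQ x))).div_const (Real.log 2))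
  have z : BP x - BQ x * (BP x / BQ x) = 0 := by field_simp; ring
  rw [z, zero_div, add_zero] at s
  refine hasSum_le ?_ s (h3.sigma_factor ⟨x, hx⟩).hasSum
  rintro ⟨y, hy⟩
  have hyT := secn_sub T _ y hy.1
  exact pt_ineq _ _ _ (hBP.1 y hyT) (hBQ.1 y hyT) (by positivity)

/-- Monotonicity of relative entropy along sections: `n ↦ D(P_n‖Q_n)` is nondecreasing. -/
theorem kl_monotone_along_sections
    (T : Set (List ℕ)) (hT : IsTree T) (hU : NoUnary T)
    (BP BQ : List ℕ → ℝ) (hBP : IsUnitFlow T BP) (hBQ : IsUnitFlow T BQ)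
    (habs : ∀ n : ℕ, 1 ≤ n →
      Summable fun x : secn T n => |BP x * Real.logb 2 (BP x / BQ x)|) :
    ∀ m n : ℕ, 1 ≤ m → m ≤ n →
      (∑' x : secn T m, BP x * Real.logb 2 (BP x / BQ x))
        ≤ ∑' x : secn T n, BP x * Real.logb 2 (BP x / BQ x) := by
  intro m n hm hmn
  induction n, hmn using Nat.le_induction with
  | base => exact le_rfl
  | succ k hk ih =>
    exact ih.trans (kl_step T hT BP BQ hBP hBQ k (habs k (by omega)).of_abs
      (habs (k+1) (by omega)).of_abs)
end
end

section
/- Asymptotic entropy-rate comparison on trees with infinite geodesics: Let T be a rooted tree with no vertex having exactly one successor, carrying strictly positive unit flows B_P and B_Q with positive mass on the set of ends (i.e. ∑_{leaves v} B_P(v) < 1 and ∑_{leaves v} B_Q(v) < 1). Let ℓ be a length function on the non-leaf vertices of T and assume: the local entropy series of the forward transition probabilities p(y|x) = B_P(y)/B_P(x) and q(y|x) = B_Q(y)/B_Q(x) are uniformly summable, the entropies H(P_n) and H(Q_n) are finite for each n; (i) there are constants 0 < c₁ ≤ c₂ < ∞ with c₁ ≤ ℓ(x) ≤ c₂ for all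 non-leaf x; (ii) there is a finite h such that H_q(x)/ℓ(x) → h as |x| → ∞ (for every ε > 0 there is k such that |H_q(x)/ℓ(x) − h| < ε whenever x is a non-leaf vertex with |x| ≥ k); (iii) each D(P_n‖Q_n) is absolutely convergent and D(P_n‖Q_n)/n → 0 as n → ∞. Then H(P_n)/ℓ(P_n) → h and H(Q_n)/ℓ(Q_n) → h as n → ∞. -/
open scoped BigOperators
open Filter

noncomputable section

/-- Uniform summability of the family of local series `y ↦ g x y`, `y ∈ N(x)`, over the
non-leaf vertices `x` of `T`. -/
def UnifSummable (T : Set (List ℕ)) (g : List ℕ → List ℕ → ℝ) : Prop :=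
  ∀ ε : ℝ, 0 < ε → ∃ M : ℕ, ∀ x ∈ T, ¬ IsLeaf T x →
    ∃ F : Finset (List ℕ), ↑F ⊆ succs T x ∧ F.card ≤ M ∧
      (Summable fun y : {y : List ℕ // y ∈ succs T x ∧ y ∉ F} => g x y) ∧
      (∑' y : {y : List ℕ // y ∈ succs T x ∧ y ∉ F}, g x y) < ε

namespace AER

theorem phi_eq (t : ℝ) : phi t = Real.negMulLog t / Real.log 2 := by
  unfold phi Real.negMulLog Real.logb
  rw [one_div, Real.log_inv]; ring

theorem phi_nonneg {t : ℝ} (h0 : 0 ≤ t) (h1 : t ≤ 1) : 0 ≤ phi t := by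
  rw [phi_eq]
  exact div_nonneg (Real.negMulLog_nonneg h0 h1) (Real.log_nonneg (by norm_num))

theorem phi_cont : Continuous phi := by
  have : phi = fun t => Real.negMulLog t / Real.log 2 := funext phi_eq
  rw [this]
  exact Real.continuous_negMulLog.div_const _

/-- pointwise divergence term -/
def gd (a b : ℝ) : ℝ := a * Real.logb 2 (a / b) - (a - b) / Real.log 2

theorem gd_lower {a b : ℝ} (ha : 0 < a) (ha1 : a ≤ 1) (hb : 0 < b) (hb1 : b ≤ 1) :
    (a - b) ^ 2 / 4 ≤ gd a b * Real.log 2 := by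
  have hl : 0 < Real.log 2 := Real.log_pos (by norm_num)
  have e : gd a b * Real.log 2 = a * Real.log (a / b) - (a - b) := by
    unfold gd Real.logb; field_simp
  rw [e]
  obtain ⟨s, hs, rfl⟩ : ∃ s : ℝ, 0 < s ∧ a = s ^ 2 :=
    ⟨√a, Real.sqrt_pos.2 ha, (Real.sq_sqrt ha.le).symm⟩
  obtain ⟨t, ht, rfl⟩ : ∃ s : ℝ, 0 < s ∧ b = s ^ 2 :=
    ⟨√b, Real.sqrt_pos.2 hb, (Real.sq_sqrt hb.le).symm⟩
  have hs1 : s ≤ 1 := by nlinarith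
  have ht1 : t ≤ 1 := by nlinarith
  have h1 : Real.log (t / s) ≤ t / s - 1 := Real.log_le_sub_one_of_pos (by positivity)
  have h2 : Real.log (s ^ 2 / t ^ 2) = - 2 * Real.log (t / s) := by
    rw [← div_pow, Real.log_pow, ← inv_div t s, Real.log_inv]; push_cast; ring
  rw [h2]
  have h3 : s ^ 2 * Real.log (t / s) ≤ s ^ 2 * (t / s - 1) :=
    mul_le_mul_of_nonneg_left h1 (by positivity)
  have h4 : s ^ 2 * (t / s - 1) = s * t - s ^ 2 := by field_simp
  have h5 : (s ^ 2 - t ^ 2) ^ 2 / 4 ≤ (s - t) ^ 2 := by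
    have : (s ^ 2 - t ^ 2) ^ 2 = (s - t) ^ 2 * (s + t) ^ 2 := by ring
    have h6 : (s + t) ^ 2 ≤ 4 := by nlinarith
    nlinarith [sq_nonneg (s - t)]
  nlinarith

theorem gd_nonneg {a b : ℝ} (ha : 0 < a) (ha1 : a ≤ 1) (hb : 0 < b) (hb1 : b ≤ 1) :
    0 ≤ gd a b := by
  have := gd_lower ha ha1 hb hb1
  have hl : 0 < Real.log 2 := Real.log_pos (by norm_num)
  by_contra hc
  push Not at hc
  nlinarith [sq_nonneg (a - b)]

theorem pointwise (ε : ℝ) (hε : 0 < ε) : ∃ K : ℝ, 0 ≤ K ∧ ∀ a b : ℝ, 0 < a → a ≤ 1 → 0 < b →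
    b ≤ 1 → |phi a - phi b| ≤ ε + K * gd a b := by
  have hc : IsCompact (Set.Icc (0:ℝ) 1) := isCompact_Icc
  obtain ⟨C, hC⟩ := hc.exists_bound_of_continuousOn phi_cont.continuousOn
  have hu := hc.uniformContinuousOn_of_continuous phi_cont.continuousOn
  rw [Metric.uniformContinuousOn_iff] at hu
  obtain ⟨δ, hδ, hu⟩ := hu ε hε
  have hl : 0 < Real.log 2 := Real.log_pos (by norm_num)
  have hC0 : 0 ≤ C := (norm_nonneg _).trans (hC 0 (by simp))
  refine ⟨2 * C * (4 * Real.log 2) / δ ^ 2, by positivity, ?_⟩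
  intro a b ha ha1 hb hb1
  have hg := gd_lower ha ha1 hb hb1
  have hg0 := gd_nonneg ha ha1 hb hb1
  by_cases hd : |a - b| < δ
  · have := hu a ⟨ha.le, ha1⟩ b ⟨hb.le, hb1⟩ (by rwa [Real.dist_eq])
    rw [Real.dist_eq] at this
    have : 0 ≤ 2 * C * (4 * Real.log 2) / δ ^ 2 * gd a b := by positivity
    linarith
  · push Not at hd
    have h1 := hC a ⟨ha.le, ha1⟩
    have h2 := hC b ⟨hb.le, hb1⟩
    rw [Real.norm_eq_abs] at h1 h2
    have h3 : |phi a - phi b| ≤ 2 * C := (abs_sub _ _).trans (by linarith)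
    have h4 : δ ^ 2 ≤ (a - b) ^ 2 := by
      rw [← sq_abs (a - b)]; gcongr
    have h5 : 1 ≤ (4 * Real.log 2) / δ ^ 2 * gd a b := by
      rw [div_mul_eq_mul_div, le_div_iff₀ (by positivity)]; linarith
    have : 2 * C * 1 ≤ 2 * C * ((4 * Real.log 2) / δ ^ 2 * gd a b) :=
      mul_le_mul_of_nonneg_left h5 (by positivity)
    have e : 2 * C * (4 * Real.log 2) / δ ^ 2 * gd a b =
      2 * C * ((4 * Real.log 2) / δ ^ 2 * gd a b) := by ring
    rw [e]; linarith

/-- Splitting a finite set off. -/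
theorem split_fin {α : Type*} (S : Set α) (F : Finset α) (hF : ↑F ⊆ S) (f : α → ℝ)
    (hs : Summable fun y : {y : α // y ∈ S ∧ y ∉ F} => f y) :
    HasSum (fun y : S => f y) (∑ y ∈ F, f y + ∑' y : {y : α // y ∈ S ∧ y ∉ F}, f y) := by
  have e : S = (↑F : Set α) ∪ {y | y ∈ S ∧ y ∉ F} := by
    ext y; simp only [Set.mem_union, Finset.mem_coe, Set.mem_ofPred_eq]
    constructor
    · intro h; by_cases hy : y ∈ F <;> simp [*]
    · rintro (h | h)
      · exact hF h
      · exact h.1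
  have h1 : HasSum (fun y : (↑F : Set α) => f y) (∑ y ∈ F, f y) := F.hasSum f
  have h2 : HasSum (fun y : {y : α | y ∈ S ∧ y ∉ F} => f y)
    (∑' y : {y : α // y ∈ S ∧ y ∉ F}, f y) := hs.hasSum
  have hd : Disjoint (↑F : Set α) {y | y ∈ S ∧ y ∉ F} := by
    rw [Set.disjoint_left]; intro y hy hy'; exact hy'.2 hy
  have h3 := HasSum.add_disjoint hd h1 h2
  have h4 : ∀ S' : Set α, S = S' → HasSum (fun y : S' => f y)
    (∑ y ∈ F, f y + ∑' y : {y : α // y ∈ S ∧ y ∉ F}, f y) → HasSum (fun y : S => f y)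
    (∑ y ∈ F, f y + ∑' y : {y : α // y ∈ S ∧ y ∉ F}, f y) := by
    rintro S' rfl h; exact h
  exact h4 _ e h3

open Classical in
theorem local_bound (ε : ℝ) (hε : 0 < ε) (M : ℕ) : ∃ K : ℝ, 0 ≤ K ∧
    ∀ (α : Type) (S : Set α) (p q : α → ℝ) (F F' : Finset α),
    (∀ y ∈ S, 0 < p y) → (∀ y ∈ S, 0 < q y) →
    HasSum (fun y : S => p y) 1 → HasSum (fun y : S => q y) 1 →
    ↑F ⊆ S → ↑F' ⊆ S → F.card ≤ M → F'.card ≤ M →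
    (Summable fun y : {y : α // y ∈ S ∧ y ∉ F} => phi (p y)) →
    (∑' y : {y : α // y ∈ S ∧ y ∉ F}, phi (p y)) < ε →
    (Summable fun y : {y : α // y ∈ S ∧ y ∉ F'} => phi (q y)) →
    (∑' y : {y : α // y ∈ S ∧ y ∉ F'}, phi (q y)) < ε →
    (Summable fun y : S => p y * Real.logb 2 (p y / q y)) →
    0 ≤ (∑' y : S, p y * Real.logb 2 (p y / q y)) ∧
    |(∑' y : S, phi (p y)) - ∑' y : S, phi (q y)| ≤
      2 * ε + K * ∑' y : S, p y * Real.logb 2 (p y / q y) := by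
  obtain ⟨K, hK, hp⟩ := pointwise (ε / (2 * M + 1)) (by positivity)
  refine ⟨K, hK, ?_⟩
  intro α S p q F F' p0 q0 sp sq hF hF' cF cF' s1 t1 s2 t2 sD
  have p1 : ∀ y ∈ S, p y ≤ 1 := fun y hy =>
    le_hasSum sp ⟨y, hy⟩ (fun j _ => (p0 j j.2).le)
  have q1 : ∀ y ∈ S, q y ≤ 1 := fun y hy =>
    le_hasSum sq ⟨y, hy⟩ (fun j _ => (q0 j j.2).le)
  have hg : HasSum (fun y : S => gd (p y) (q y)) (∑' y : S, p y * Real.logb 2 (p y / q y)) := by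
    have := sD.hasSum.sub ((sp.sub sq).div_const (Real.log 2))
    simpa [gd] using this
  have g0 : ∀ y ∈ S, 0 ≤ gd (p y) (q y) := fun y hy =>
    gd_nonneg (p0 y hy) (p1 y hy) (q0 y hy) (q1 y hy)
  refine ⟨HasSum.nonneg (fun y : S => g0 y y.2) hg, ?_⟩
  set D := ∑' y : S, p y * Real.logb 2 (p y / q y) with hD
  set G := F ∪ F' with hG
  have hGS : (↑G : Set α) ⊆ S := by
    rw [hG, Finset.coe_union]; exact Set.union_subset hF hF'
  have cG : (G.card : ℝ) ≤ 2 * M := by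
    have : G.card ≤ F.card + F'.card := Finset.card_union_le F F'
    have : G.card ≤ 2 * M := by omega
    exact_mod_cast this
  have key : ∀ (r : α → ℝ) (F : Finset α), (∀ y ∈ S, 0 < r y) → (∀ y ∈ S, r y ≤ 1) →
      ↑F ⊆ S → F ⊆ G →
      (Summable fun y : {y : α // y ∈ S ∧ y ∉ F} => phi (r y)) →
      (∑' y : {y : α // y ∈ S ∧ y ∉ F}, phi (r y)) < ε →
      ∃ t, 0 ≤ t ∧ t < ε ∧ (∑' y : S, phi (r y)) = ∑ y ∈ G, phi (r y) + t := by
    intro r F r0 r1 hF hFG s t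
    have h1 := split_fin S F hF (fun y => phi (r y)) s
    have hn : ∀ y ∈ S, 0 ≤ phi (r y) := fun y hy => phi_nonneg (r0 y hy).le (r1 y hy)
    have s' : Summable fun y : {y : α // y ∈ S ∧ y ∉ G} => phi (r y) :=
      h1.summable.comp_injective (i := fun y : {y : α // y ∈ S ∧ y ∉ G} => (⟨y, y.2.1⟩ : S))
        (fun a b hab => Subtype.ext (by simpa using hab))
    have h2 := split_fin S G hGS (fun y => phi (r y)) s'
    refine ⟨_, tsum_nonneg fun y : {y : α // y ∈ S ∧ y ∉ G} => hn y y.2.1, ?_, h2.tsum_eq⟩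
    have h3 := h1.unique h2
    have h4 : ∑ y ∈ F, phi (r y) ≤ ∑ y ∈ G, phi (r y) :=
      Finset.sum_le_sum_of_subset_of_nonneg hFG (fun y hy _ => hn y (hGS hy))
    linarith
  obtain ⟨t, ht0, ht, e1⟩ := key p F p0 p1 hF Finset.subset_union_left s1 t1
  obtain ⟨u, hu0, hu, e2⟩ := key q F' q0 q1 hF' Finset.subset_union_right s2 t2
  have h5 : |∑ y ∈ G, phi (p y) - ∑ y ∈ G, phi (q y)| ≤ ε + K * D := by
    rw [← Finset.sum_sub_distrib]
    calc |∑ y ∈ G, (phi (p y) - phi (q y))| ≤ ∑ y ∈ G, |phi (p y) - phi (q y)| :=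
          Finset.abs_sum_le_sum_abs _ _
      _ ≤ ∑ y ∈ G, (ε / (2 * M + 1) + K * gd (p y) (q y)) :=
          Finset.sum_le_sum fun y hy => hp _ _ (p0 y (hGS hy)) (p1 y (hGS hy)) (q0 y (hGS hy))
            (q1 y (hGS hy))
      _ = G.card * (ε / (2 * M + 1)) + K * ∑ y ∈ G, gd (p y) (q y) := by
          rw [Finset.sum_add_distrib, Finset.mul_sum]; simp
      _ ≤ ε + K * D := by
          have a1 : (G.card : ℝ) * (ε / (2 * M + 1)) ≤ ε := by
            rw [mul_div_assoc', div_le_iff₀ (by positivity)]; nlinarith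
          have a2 : ∑ y ∈ G, gd (p y) (q y) ≤ D := by
            have sG : Summable fun y : {y : α // y ∈ S ∧ y ∉ G} => gd (p y) (q y) :=
              hg.summable.comp_injective
                (i := fun y : {y : α // y ∈ S ∧ y ∉ G} => (⟨y, y.2.1⟩ : S))
                (fun a b hab => Subtype.ext (by simpa using hab))
            have := (split_fin S G hGS (fun y => gd (p y) (q y)) sG).unique hg
            have : 0 ≤ ∑' y : {y : α // y ∈ S ∧ y ∉ G}, gd (p y) (q y) :=
              tsum_nonneg fun y => g0 y y.2.1
            linarith
          have := mul_le_mul_of_nonneg_left a2 hK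
          linarith
  rw [e1, e2]
  rw [abs_le] at h5 ⊢
  constructor <;> linarith [h5.1, h5.2]

/-- Final averaging. -/
theorem averaging (h c : ℝ) (hc : 0 < c) (e w d : ℕ → ℝ) (HH LL DD : ℕ → ℝ)
    (hH : ∀ n, HH (n + 1) - HH n = e n) (hL : ∀ n, LL (n + 1) - LL n = w n)
    (hD : ∀ n, DD (n + 1) - DD n = d n) (hw : ∀ n, c ≤ w n)
    (hDl : Tendsto (fun n : ℕ => DD n / n) atTop (nhds 0))
    (hb : ∀ ε : ℝ, 0 < ε → ∃ C : ℝ, 0 ≤ C ∧ ∃ K : ℕ, ∀ k, K ≤ k →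
      |e k - h * w k| ≤ ε + C * d k) :
    Tendsto (fun n => HH n / LL n) atTop (nhds h) := by
  have hLn : ∀ n : ℕ, LL 0 + c * n ≤ LL n := by
    intro n
    induction n with
    | zero => simp
    | succ n ih => push_cast; linarith [hL n, hw n]
  have hnat : Tendsto (fun n : ℕ => (n : ℝ)) atTop atTop := tendsto_natCast_atTop_atTop
  have hev : ∀ᶠ n : ℕ in atTop, c / 2 * n ≤ LL n ∧ 0 < (n : ℝ) := by
    filter_upwards [hnat.eventually_ge_atTop (-(2 * LL 0) / c), hnat.eventually_gt_atTop 0]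
      with n h1 h2
    rw [div_le_iff₀ hc] at h1
    exact ⟨by linarith [hLn n], h2⟩
  have hbound : ∀ ε : ℝ, 0 < ε → ∀ᶠ n : ℕ in atTop, |HH n - h * LL n| ≤ ε * n := by
    intro ε hε
    obtain ⟨C, hC, K, hK⟩ := hb (ε / 2) (by positivity)
    have h1 : ∀ n, K ≤ n → |HH n - h * LL n| ≤
        |HH K - h * LL K| + ε / 2 * (n - K) + C * (DD n - DD K) := by
      intro n hn
      induction n, hn using Nat.le_induction with
      | base => simp
      | succ n hn ih =>
        have e1 : HH (n + 1) - h * LL (n + 1) = (HH n - h * LL n) + (e n - h * w n) := by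
          rw [← hH, ← hL]; ring
        rw [e1]
        have := abs_add_le (HH n - h * LL n) (e n - h * w n)
        have h3 := hK n hn
        rw [← hD] at h3
        push_cast
        linarith
    have t1 : Tendsto (fun n : ℕ => (|HH K - h * LL K| - C * DD K) / (n : ℝ) + C * (DD n / n))
        atTop (nhds (0 + C * 0)) :=
      (tendsto_const_nhds.div_atTop hnat).add (hDl.const_mul C)
    have t2 := t1.eventually (eventually_lt_nhds (show 0 + C * 0 < ε / 2 by simpa using half_pos hε))
    filter_upwards [t2, eventually_ge_atTop K, hnat.eventually_gt_atTop 0] with n h2 h3 h4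
    have h5 := h1 n h3
    have h6 : (|HH K - h * LL K| - C * DD K) / (n : ℝ) + C * (DD n / n) =
      (|HH K - h * LL K| - C * DD K + C * DD n) / n := by ring
    rw [h6, div_lt_iff₀ h4] at h2
    have : 0 ≤ ε / 2 * (K : ℝ) := by positivity
    linarith
  rw [Metric.tendsto_nhds]
  intro ε hε
  filter_upwards [hbound (ε * (c / 4)) (by positivity), hev] with n h1 h2
  have hpos : 0 < LL n := lt_of_lt_of_le (mul_pos (by positivity) h2.2) h2.1
  rw [Real.dist_eq]
  have e1 : HH n / LL n - h = (HH n - h * LL n) / LL n := by field_simp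
  rw [e1, abs_div, abs_of_pos hpos, div_lt_iff₀ hpos]
  have : ε * (c / 2 * n) ≤ ε * LL n := mul_le_mul_of_nonneg_left h2.1 hε.le
  have : 0 < ε * (c / 4) * n := mul_pos (by positivity) h2.2
  linarith

def IL (T : Set (List ℕ)) (n : ℕ) : Set (List ℕ) := {x | x ∈ T ∧ x.length = n ∧ ¬ IsLeaf T x}
def LL (T : Set (List ℕ)) (n : ℕ) : Set (List ℕ) := {x | x ∈ T ∧ x.length = n}
def EL (T : Set (List ℕ)) (n : ℕ) : Set (List ℕ) := {x | IsLeaf T x ∧ x.length ≤ n}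

theorem secn_eq (T : Set (List ℕ)) (n : ℕ) : secn T n = IL T n ∪ EL T n := by
  ext x
  change ((x ∈ T ∧ x.length = n) ∨ (IsLeaf T x ∧ x.length < n)) ↔
    ((x ∈ T ∧ x.length = n ∧ ¬ IsLeaf T x) ∨ (IsLeaf T x ∧ x.length ≤ n))
  have : IsLeaf T x → x ∈ T := fun h => h.1
  by_cases hx : IsLeaf T x
  · simp only [hx, this hx]; simp; omega
  · simp [hx]

theorem secn_succ_eq (T : Set (List ℕ)) (n : ℕ) : secn T (n + 1) = LL T (n + 1) ∪ EL T n := by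
  ext x
  change ((x ∈ T ∧ x.length = n + 1) ∨ (IsLeaf T x ∧ x.length < n + 1)) ↔
    ((x ∈ T ∧ x.length = n + 1) ∨ (IsLeaf T x ∧ x.length ≤ n))
  rw [Nat.lt_succ_iff]

theorem disj1 (T : Set (List ℕ)) (n : ℕ) : Disjoint (IL T n) (EL T n) := by
  rw [Set.disjoint_left]; intro x hx hy; exact hx.2.2 hy.1

theorem disj2 (T : Set (List ℕ)) (n : ℕ) : Disjoint (LL T (n + 1)) (EL T n) := by
  rw [Set.disjoint_left]; intro x hx hy
  have := hx.2; have := hy.2; omega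

theorem not_leaf_of_succ {T : Set (List ℕ)} {x y : List ℕ} (h : y ∈ succs T x) : ¬ IsLeaf T x := by
  intro hl; rw [hl.2] at h; exact h

def sigFun (T : Set (List ℕ)) (n : ℕ) (z : Σ x : IL T n, succs T (x : List ℕ)) : LL T (n + 1) :=
  ⟨z.2, z.2.2.1, by
    obtain ⟨m, hm⟩ := z.2.2.2
    rw [hm]; simp [z.1.2.2.1]⟩

theorem sigFun_bij (T : Set (List ℕ)) (hT : IsTree T) (n : ℕ) :
    Function.Bijective (sigFun T n) := by
  constructor
  · rintro ⟨⟨x, hx⟩, ⟨y, hy⟩⟩ ⟨⟨x', hx'⟩, ⟨y', hy'⟩⟩ hz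
    have e : y = y' := congrArg Subtype.val hz
    subst e
    obtain ⟨m, hm⟩ := hy.2
    obtain ⟨m', hm'⟩ := hy'.2
    have : x = x' := by
      have h2 := hm.symm.trans hm'
      have := congrArg List.dropLast h2
      simpa using this
    subst this
    rfl
  · rintro ⟨y, hy⟩
    have hne : y ≠ [] := by
      rintro rfl; have := hy.2; simp at this
    have e : y = y.dropLast ++ [y.getLast hne] := (List.dropLast_append_getLast hne).symm
    have hx : y.dropLast ∈ T := hT.2 y hy.1 _ (List.dropLast_prefix y)
    have hs : y ∈ succs T y.dropLast := ⟨hy.1, _, e⟩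
    have hl : y.dropLast.length = n := by
      have := hy.2; rw [List.length_dropLast]; omega
    exact ⟨⟨⟨y.dropLast, hx, hl, not_leaf_of_succ hs⟩, ⟨y, hs⟩⟩, rfl⟩

def sigEquiv (T : Set (List ℕ)) (hT : IsTree T) (n : ℕ) :
    (Σ x : IL T n, succs T (x : List ℕ)) ≃ LL T (n + 1) :=
  Equiv.ofBijective _ (sigFun_bij T hT n)

theorem summ_sub {A B : Set (List ℕ)} (hAB : A ⊆ B) {f : List ℕ → ℝ}
    (h : Summable fun x : B => f x) : Summable fun x : A => f x :=
  h.comp_injective (i := Set.inclusion hAB) (Set.inclusion_injective hAB)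

theorem tsum_union {A B C : Set (List ℕ)} (hC : C = A ∪ B) (hd : Disjoint A B) {f : List ℕ → ℝ}
    (h : Summable fun x : C => f x) :
    ∑' x : C, f x = ∑' x : A, f x + ∑' x : B, f x := by
  subst hC
  exact Summable.tsum_union_disjoint hd (summ_sub Set.subset_union_left h)
    (summ_sub Set.subset_union_right h)

theorem step (T : Set (List ℕ)) (hT : IsTree T) (n : ℕ) (f : List ℕ → ℝ)
    (h1 : Summable fun x : secn T n => f x) (h2 : Summable fun x : secn T (n + 1) => f x) :
    (∀ x ∈ IL T n, Summable fun y : succs T x => f y) ∧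
    HasSum (fun x : IL T n => (∑' y : succs T (x : List ℕ), f y) - f x)
      ((∑' x : secn T (n + 1), f x) - ∑' x : secn T n, f x) := by
  have hL : Summable fun x : LL T (n + 1) => f x :=
    summ_sub (by rw [secn_succ_eq]; exact Set.subset_union_left) h2
  have hI : Summable fun x : IL T n => f x :=
    summ_sub (by rw [secn_eq]; exact Set.subset_union_left) h1
  have hsig : HasSum (fun z : Σ x : IL T n, succs T (x : List ℕ) => f z.2)
      (∑' x : LL T (n + 1), f x) :=
    ((sigEquiv T hT n).hasSum_iff (f := fun x : LL T (n + 1) => f x)).2 hL.hasSum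
  have hs : ∀ x : IL T n, Summable fun y : succs T (x : List ℕ) => f y :=
    fun x => hsig.summable.sigma_factor x
  refine ⟨fun x hx => hs ⟨x, hx⟩, ?_⟩
  have h3 := hsig.sigma (fun x => (hs x).hasSum)
  have h4 := h3.sub hI.hasSum
  rw [tsum_union (secn_succ_eq T n) (disj2 T n) h2, tsum_union (secn_eq T n) (disj1 T n) h1]
  rw [add_sub_add_right_eq_sub]
  exact h4

theorem sec_nonleaf_mem {T : Set (List ℕ)} {n : ℕ} {x : List ℕ} (h : x ∈ secn T n) : x ∈ T := by
  rcases h with h | h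
  · exact h.1
  · exact h.1.1

theorem flow_sum (T : Set (List ℕ)) (hT : IsTree T) (B : List ℕ → ℝ) (hB : IsUnitFlow T B)
    (n : ℕ) : HasSum (fun x : secn T n => B x) 1 := by
  induction n with
  | zero =>
    have e : secn T 0 = {[]} := by
      ext x
      change ((x ∈ T ∧ x.length = 0) ∨ (IsLeaf T x ∧ x.length < 0)) ↔ x = []
      constructor
      · rintro (h | h)
        · exact List.length_eq_zero_iff.1 h.2
        · omega
      · rintro rfl; exact Or.inl ⟨hT.1, rfl⟩
    rw [e]
    have := hasSum_unique (fun x : ({[]} : Set (List ℕ)) => B x)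
    convert this using 1
    exact hB.2.1.symm
  | succ n ih =>
    have hI : Summable fun x : IL T n => B x :=
      summ_sub (by rw [secn_eq]; exact Set.subset_union_left) ih.summable
    have hE : Summable fun x : EL T n => B x :=
      summ_sub (by rw [secn_eq]; exact Set.subset_union_right) ih.summable
    have hloc : ∀ x : IL T n, HasSum (fun y : succs T (x : List ℕ) => B y) (B x) :=
      fun x => hB.2.2 x x.2.1 x.2.2.2
    have hsig : Summable (fun z : Σ x : IL T n, succs T (x : List ℕ) => B z.2) := by
      rw [summable_sigma_of_nonneg (fun z => (hB.1 _ z.2.2.1).le)]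
      refine ⟨fun x => (hloc x).summable, ?_⟩
      convert hI using 2 with x
      exact (hloc x).tsum_eq
    have hL : Summable fun x : LL T (n + 1) => B x :=
      ((sigEquiv T hT n).summable_iff (f := fun x : LL T (n + 1) => B x)).1 hsig
    have hS : Summable fun x : secn T (n + 1) => B x := by
      rw [secn_succ_eq]
      exact (hL.hasSum.add_disjoint (disj2 T n) hE.hasSum).summable
    have h1 := (step T hT n B ih.summable hS).2
    have h2 : HasSum (fun x : IL T n => (∑' y : succs T (x : List ℕ), B y) - B x) 0 := by
      convert (hasSum_zero : HasSum (fun _ : IL T n => (0 : ℝ)) 0) using 2 with x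
      rw [(hloc x).tsum_eq, sub_self]
    have h3 := h1.unique h2
    rw [ih.tsum_eq] at h3
    have h4 := hS.hasSum
    rwa [sub_eq_zero.1 h3] at h4

theorem lenWt_succ (ℓ : List ℕ → ℝ) (x : List ℕ) (m : ℕ) :
    lenWt ℓ (x ++ [m]) = lenWt ℓ x + ℓ x := by
  unfold lenWt
  rw [List.length_append, List.length_singleton, Finset.sum_range_succ]
  congr 1
  · apply Finset.sum_congr rfl
    intro i hi
    rw [List.take_append_of_le_length (Finset.mem_range.1 hi).le]
  · simp

theorem lenWt_bound (T : Set (List ℕ)) (hT : IsTree T) (ℓ : List ℕ → ℝ) (c₁ c₂ : ℝ) (hc₁ : 0 < c₁)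
    (hℓ : ∀ x ∈ T, ¬ IsLeaf T x → c₁ ≤ ℓ x ∧ ℓ x ≤ c₂) (x : List ℕ) (hx : x ∈ T) :
    0 ≤ lenWt ℓ x ∧ lenWt ℓ x ≤ x.length * c₂ := by
  have h1 : ∀ i ∈ Finset.range x.length, 0 ≤ ℓ (x.take i) ∧ ℓ (x.take i) ≤ c₂ := by
    intro i hi
    have hi := Finset.mem_range.1 hi
    have hs : x.take (i + 1) ∈ succs T (x.take i) :=
      ⟨hT.2 x hx _ (List.take_prefix _ _), x[i], by rw [List.take_succ_eq_append_getElem hi]⟩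
    have := hℓ (x.take i) (hT.2 x hx _ (List.take_prefix _ _)) (not_leaf_of_succ hs)
    exact ⟨hc₁.le.trans this.1, this.2⟩
  refine ⟨Finset.sum_nonneg fun i hi => (h1 i hi).1, ?_⟩
  have := Finset.sum_le_card_nsmul _ _ c₂ (fun i hi => (h1 i hi).2)
  simpa [lenWt] using this

theorem leaves_summable (T : Set (List ℕ)) (hT : IsTree T) (B : List ℕ → ℝ) (hB : IsUnitFlow T B) :
    Summable fun v : bdry T => B v := by
  refine summable_of_sum_le (c := 1) (fun v => (hB.1 v v.2.1).le) ?_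
  intro u
  obtain ⟨n, hn⟩ : ∃ n, ∀ v ∈ u, (v : List ℕ).length < n :=
    ⟨(u.sup fun v => (v : List ℕ).length) + 1, fun v hv =>
      Nat.lt_succ_of_le (Finset.le_sup (f := fun v : bdry T => (v : List ℕ).length) hv)⟩
  have h1 := flow_sum T hT B hB n
  let g : {v : bdry T // v ∈ u} ↪ secn T n :=
    ⟨fun v => ⟨v.1.1, Or.inr ⟨v.1.2, hn v.1 v.2⟩⟩, fun a b hab =>
      Subtype.ext (Subtype.ext (congrArg (fun z : secn T n => (z : List ℕ)) hab))⟩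
  have h2 : ∑ v ∈ u, B v = ∑ w ∈ u.attach.map g, B w := by
    rw [Finset.sum_map]
    exact (Finset.sum_attach u (fun v => B v)).symm
  rw [h2]
  exact sum_le_hasSum _ (fun w _ => (hB.1 w (sec_nonleaf_mem w.2)).le) h1

theorem mass_IL (T : Set (List ℕ)) (hT : IsTree T) (B : List ℕ → ℝ) (hB : IsUnitFlow T B) (n : ℕ) :
    (Summable fun x : IL T n => B x) ∧ ∑' x : IL T n, B x ≤ 1 ∧
    1 - ∑' v : bdry T, B v ≤ ∑' x : IL T n, B x := by
  have h1 := flow_sum T hT B hB n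
  have h2 := tsum_union (secn_eq T n) (disj1 T n) h1.summable
  rw [h1.tsum_eq] at h2
  have hE : ∑' x : EL T n, B x ≤ ∑' v : bdry T, B v := by
    have hs := leaves_summable T hT B hB
    have hsub : EL T n ⊆ bdry T := fun x hx => hx.1
    exact Summable.tsum_le_tsum_of_inj (Set.inclusion hsub) (Set.inclusion_injective hsub)
      (fun v _ => (hB.1 v v.2.1).le) (fun v => le_rfl) (summ_sub hsub hs) hs
  have hE0 : 0 ≤ ∑' x : EL T n, B x := tsum_nonneg fun v => (hB.1 v v.2.1.1).le
  refine ⟨summ_sub (by rw [secn_eq]; exact Set.subset_union_left) h1.summable, ?_, ?_⟩ <;> linarith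

theorem hcongr {ι : Type*} {f g : ι → ℝ} {a : ℝ} (h : HasSum g a) (e : ∀ y, f y = g y) :
    HasSum f a := by rwa [funext e]

theorem loc_phi (S : Set (List ℕ)) (B : List ℕ → ℝ) (b : ℝ) (hb : 0 < b) (h0 : ∀ y ∈ S, 0 < B y)
    (hB : HasSum (fun y : S => B y) b) (hs : Summable fun y : S => phi (B y)) :
    (∑' y : S, phi (B y)) - phi b = b * ∑' y : S, phi (B y / b) := by
  have h1 := (hs.hasSum.add (hB.mul_right (Real.logb 2 b))).div_const b
  have h2 : HasSum (fun y : S => phi (B y / b))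
      (((∑' y : S, phi (B y)) + b * Real.logb 2 b) / b) := by
    refine hcongr h1 fun y => ?_
    have hy := h0 y y.2
    unfold phi
    rw [one_div_div, Real.logb_div hb.ne' hy.ne', one_div, Real.logb_inv]
    field_simp
    ring
  rw [h2.tsum_eq]
  unfold phi
  rw [one_div b, Real.logb_inv]
  field_simp
  ring

theorem loc_div (S : Set (List ℕ)) (B C : List ℕ → ℝ) (b c : ℝ) (hb : 0 < b) (hc : 0 < c)
    (h0 : ∀ y ∈ S, 0 < B y) (h0' : ∀ y ∈ S, 0 < C y)
    (hB : HasSum (fun y : S => B y) b)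
    (hs : Summable fun y : S => B y * Real.logb 2 (B y / C y)) :
    (Summable fun y : S => B y / b * Real.logb 2 ((B y / b) / (C y / c))) ∧
    (∑' y : S, B y * Real.logb 2 (B y / C y)) - b * Real.logb 2 (b / c) =
      b * ∑' y : S, B y / b * Real.logb 2 ((B y / b) / (C y / c)) := by
  have h1 := (hs.hasSum.sub (hB.mul_right (Real.logb 2 (b / c)))).div_const b
  have h2 : HasSum (fun y : S => B y / b * Real.logb 2 ((B y / b) / (C y / c)))
      (((∑' y : S, B y * Real.logb 2 (B y / C y)) - b * Real.logb 2 (b / c)) / b) := by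
    refine hcongr h1 fun y => ?_
    have hy := h0 y y.2
    have hy' := h0' y y.2
    rw [Real.logb_div (by positivity) (by positivity), Real.logb_div hy.ne' hb.ne',
      Real.logb_div hy'.ne' hc.ne', Real.logb_div hy.ne' hy'.ne', Real.logb_div hb.ne' hc.ne']
    field_simp
    ring
  refine ⟨h2.summable, ?_⟩
  rw [h2.tsum_eq]
  field_simp

theorem main (T : Set (List ℕ)) (hT : IsTree T)
    (BP BQ : List ℕ → ℝ) (hBP : IsUnitFlow T BP) (hBQ : IsUnitFlow T BQ)
    (hendsP : (∑' v : bdry T, BP v) < 1)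
    (hUSp : UnifSummable T (fun x y => phi (BP y / BP x)))
    (hUSq : UnifSummable T (fun x y => phi (BQ y / BQ x)))
    (hHPn : ∀ n : ℕ, Summable fun x : secn T n => phi (BP x))
    (ℓ : List ℕ → ℝ) (c₁ c₂ : ℝ) (hc₁ : 0 < c₁) (hc₁₂ : c₁ ≤ c₂)
    (hℓ : ∀ x ∈ T, ¬ IsLeaf T x → c₁ ≤ ℓ x ∧ ℓ x ≤ c₂)
    (h : ℝ)
    (hh : ∀ ε : ℝ, 0 < ε → ∃ k : ℕ, ∀ x ∈ T, ¬ IsLeaf T x → k ≤ x.length →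
      |(∑' y : succs T x, phi (BQ y / BQ x)) / ℓ x - h| < ε)
    (hDn : ∀ n : ℕ, Summable fun x : secn T n => |BP x * Real.logb 2 (BP x / BQ x)|)
    (hDlim : Tendsto (fun n : ℕ =>
        (∑' x : secn T n, BP x * Real.logb 2 (BP x / BQ x)) / n) atTop (nhds 0)) :
    Tendsto (fun n : ℕ =>
        (∑' x : secn T n, phi (BP x)) / (∑' x : secn T n, lenWt ℓ x * BP x))
      atTop (nhds h) := by
  have hc₂ : 0 < c₂ := hc₁.trans_le hc₁₂
  have hLs : ∀ n, Summable fun x : secn T n => lenWt ℓ x * BP x := by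
    intro n
    refine Summable.of_nonneg_of_le (f := fun x : secn T n => (n * c₂) * BP x) ?_ ?_
      ((flow_sum T hT BP hBP n).summable.mul_left _)
    · intro x
      have hx := sec_nonleaf_mem x.2
      exact mul_nonneg (lenWt_bound T hT ℓ c₁ c₂ hc₁ hℓ x hx).1 (hBP.1 x hx).le
    · intro x
      have hx := sec_nonleaf_mem x.2
      have hl : (x : List ℕ).length ≤ n := by
        rcases x.2 with h | h
        · exact h.2.le
        · exact h.2.le
      have hl' : ((x : List ℕ).length : ℝ) ≤ n := by exact_mod_cast hl
      refine mul_le_mul_of_nonneg_right ?_ (hBP.1 x hx).le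
      exact (lenWt_bound T hT ℓ c₁ c₂ hc₁ hℓ x hx).2.trans
        (mul_le_mul_of_nonneg_right hl' hc₂.le)
  have hloc : ∀ n, ∀ x : IL T n, HasSum (fun y : succs T (x : List ℕ) => BP y) (BP x) :=
    fun n x => hBP.2.2 x x.2.1 x.2.2.2
  have hlocQ : ∀ n, ∀ x : IL T n, HasSum (fun y : succs T (x : List ℕ) => BQ y) (BQ x) :=
    fun n x => hBQ.2.2 x x.2.1 x.2.2.2
  have hP0 : ∀ n, ∀ x : IL T n, 0 < BP x := fun n x => hBP.1 x x.2.1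
  have hQ0 : ∀ n, ∀ x : IL T n, 0 < BQ x := fun n x => hBQ.1 x x.2.1
  -- increments
  have hw : ∀ n, HasSum (fun x : IL T n => ℓ x * BP x)
      ((∑' x : secn T (n + 1), lenWt ℓ x * BP x) - ∑' x : secn T n, lenWt ℓ x * BP x) := by
    intro n
    have h1 := (step T hT n (fun x => lenWt ℓ x * BP x) (hLs n) (hLs (n + 1))).2
    convert h1 using 2 with x
    have h2 : HasSum (fun y : succs T (x : List ℕ) => lenWt ℓ y * BP y)
        ((lenWt ℓ x + ℓ x) * BP x) := by
      refine hcongr ((hloc n x).mul_left (lenWt ℓ x + ℓ x)) fun y => ?_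
      obtain ⟨m, hm⟩ := y.2.2
      congr 1
      rw [hm, lenWt_succ]
    rw [h2.tsum_eq]; ring
  have he : ∀ n, HasSum (fun x : IL T n =>
      BP x * ∑' y : succs T (x : List ℕ), phi (BP y / BP x))
      ((∑' x : secn T (n + 1), phi (BP x)) - ∑' x : secn T n, phi (BP x)) := by
    intro n
    have h1 := step T hT n (fun x => phi (BP x)) (hHPn n) (hHPn (n + 1))
    convert h1.2 using 2 with x
    exact (loc_phi _ BP (BP x) (hP0 n x) (fun y hy => hBP.1 y hy.1) (hloc n x)
      (h1.1 x x.2)).symm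
  have hdd : ∀ n, (∀ x : IL T n, Summable fun y : succs T (x : List ℕ) =>
        BP y / BP x * Real.logb 2 ((BP y / BP x) / (BQ y / BQ x))) ∧
      HasSum (fun x : IL T n => BP x * ∑' y : succs T (x : List ℕ),
        BP y / BP x * Real.logb 2 ((BP y / BP x) / (BQ y / BQ x)))
      ((∑' x : secn T (n + 1), BP x * Real.logb 2 (BP x / BQ x)) -
        ∑' x : secn T n, BP x * Real.logb 2 (BP x / BQ x)) := by
    intro n
    have h1 := step T hT n (fun x => BP x * Real.logb 2 (BP x / BQ x)) (hDn n).of_abs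
      (hDn (n + 1)).of_abs
    have h2 := fun x : IL T n => loc_div _ BP BQ (BP x) (BQ x) (hP0 n x) (hQ0 n x)
      (fun y hy => hBP.1 y hy.1) (fun y hy => hBQ.1 y hy.1) (hloc n x) (h1.1 x x.2)
    refine ⟨fun x => (h2 x).1, ?_⟩
    convert h1.2 using 2 with x
    exact (h2 x).2.symm
  refine averaging h (c₁ * (1 - ∑' v : bdry T, BP v)) (mul_pos hc₁ (by linarith)) _ _ _
    (fun n => ∑' x : secn T n, phi (BP x)) (fun n => ∑' x : secn T n, lenWt ℓ x * BP x)
    (fun n => ∑' x : secn T n, BP x * Real.logb 2 (BP x / BQ x))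
    (fun n => rfl) (fun n => rfl) (fun n => rfl) ?_ hDlim ?_
  · intro n
    obtain ⟨m1, m2, m3⟩ := mass_IL T hT BP hBP n
    have h1 : c₁ * ∑' x : IL T n, BP x ≤
        (∑' x : secn T (n + 1), lenWt ℓ x * BP x) - ∑' x : secn T n, lenWt ℓ x * BP x :=
      hasSum_le (fun x : IL T n => mul_le_mul_of_nonneg_right (hℓ x x.2.1 x.2.2.2).1
        (hP0 n x).le) (m1.hasSum.mul_left c₁) (hw n)
    exact (mul_le_mul_of_nonneg_left m3 hc₁.le).trans h1
  · intro ε hε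
    obtain ⟨M1, hM1⟩ := hUSp (ε / 4) (by positivity)
    obtain ⟨M2, hM2⟩ := hUSq (ε / 4) (by positivity)
    obtain ⟨C, hC, hK⟩ := local_bound (ε / 4) (by positivity) (max M1 M2)
    obtain ⟨k0, hk0⟩ := hh (ε / (2 * c₂)) (by positivity)
    refine ⟨C, hC, k0, ?_⟩
    intro k hk
    obtain ⟨m1, m2, m3⟩ := mass_IL T hT BP hBP k
    have hdiff := (he k).sub ((hw k).mul_left h)
    have hbig := (m1.hasSum.mul_left ε).add ((hdd k).2.mul_left C)
    have hpt : ∀ x : IL T k,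
        |BP x * (∑' y : succs T (x : List ℕ), phi (BP y / BP x)) - h * (ℓ x * BP x)| ≤
        ε * BP x + C * (BP x * ∑' y : succs T (x : List ℕ),
        BP y / BP x * Real.logb 2 ((BP y / BP x) / (BQ y / BQ x))) := by
      intro x
      obtain ⟨F, f1, f2, f3, f4⟩ := hM1 x x.2.1 x.2.2.2
      obtain ⟨F', f1', f2', f3', f4'⟩ := hM2 x x.2.1 x.2.2.2
      have px := hP0 k x
      have qx := hQ0 k x
      have hs1 : HasSum (fun y : succs T (x : List ℕ) => BP y / BP x) 1 := by
        have := (hloc k x).div_const (BP x)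
        rwa [div_self px.ne'] at this
      have hs2 : HasSum (fun y : succs T (x : List ℕ) => BQ y / BQ x) 1 := by
        have := (hlocQ k x).div_const (BQ x)
        rwa [div_self qx.ne'] at this
      have hb := (hK (List ℕ) (succs T x) (fun y => BP y / BP x) (fun y => BQ y / BQ x) F F'
        (fun y hy => div_pos (hBP.1 y hy.1) px) (fun y hy => div_pos (hBQ.1 y hy.1) qx) hs1 hs2
        f1 f1' (f2.trans (le_max_left _ _)) (f2'.trans (le_max_right _ _)) f3 f4 f3' f4'
        ((hdd k).1 x)).2
      have hq := hk0 x x.2.1 x.2.2.2 (by rw [x.2.2.1]; exact hk)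
      obtain ⟨l1, l2⟩ := hℓ x x.2.1 x.2.2.2
      have l0 : 0 < ℓ x := hc₁.trans_le l1
      set Hp := ∑' y : succs T (x : List ℕ), phi (BP y / BP x)
      set Hq := ∑' y : succs T (x : List ℕ), phi (BQ y / BQ x)
      set D := ∑' y : succs T (x : List ℕ),
        BP y / BP x * Real.logb 2 ((BP y / BP x) / (BQ y / BQ x))
      have hq2 : |Hq - h * ℓ x| ≤ ε / 2 := by
        have e1 : Hq - h * ℓ x = (Hq / ℓ x - h) * ℓ x := by field_simp
        rw [e1, abs_mul, abs_of_pos l0]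
        calc |Hq / ℓ x - h| * ℓ x ≤ ε / (2 * c₂) * c₂ :=
              mul_le_mul hq.le l2 l0.le (by positivity)
          _ = ε / 2 := by field_simp
      have e2 : BP x * Hp - h * (ℓ x * BP x) = BP x * ((Hp - Hq) + (Hq - h * ℓ x)) := by ring
      rw [e2, abs_mul, abs_of_pos px]
      have h5 : |(Hp - Hq) + (Hq - h * ℓ x)| ≤ ε + C * D :=
        (abs_add_le _ _).trans (by linarith)
      calc BP x * |(Hp - Hq) + (Hq - h * ℓ x)| ≤ BP x * (ε + C * D) :=
            mul_le_mul_of_nonneg_left h5 px.le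
        _ = _ := by ring
    have hup := hasSum_le (fun x => (abs_le.1 (hpt x)).2) hdiff hbig
    have hlo := hasSum_le (fun x => (abs_le.1 (hpt x)).1) hbig.neg hdiff
    have hm : ε * ∑' x : IL T k, BP x ≤ ε := by nlinarith
    rw [abs_le]
    constructor <;> linarith

end AER

/-- Asymptotic entropy-rate comparison on trees with infinite geodesics (Theorem `asy`):
under assumptions (i)–(iii), `H(P_n)/ℓ(P_n) → h` and `H(Q_n)/ℓ(Q_n) → h`. -/
theorem asymptotic_entropy_rate
    (T : Set (List ℕ)) (hT : IsTree T) (hU : NoUnary T)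
    (BP BQ : List ℕ → ℝ) (hBP : IsUnitFlow T BP) (hBQ : IsUnitFlow T BQ)
    (hendsP : (∑' v : bdry T, BP v) < 1) (hendsQ : (∑' v : bdry T, BQ v) < 1)
    (hUSp : UnifSummable T (fun x y => phi (BP y / BP x)))
    (hUSq : UnifSummable T (fun x y => phi (BQ y / BQ x)))
    (hHPn : ∀ n : ℕ, Summable fun x : secn T n => phi (BP x))
    (hHQn : ∀ n : ℕ, Summable fun x : secn T n => phi (BQ x))
    (ℓ : List ℕ → ℝ) (c₁ c₂ : ℝ) (hc₁ : 0 < c₁) (hc₁₂ : c₁ ≤ c₂)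
    (hℓ : ∀ x ∈ T, ¬ IsLeaf T x → c₁ ≤ ℓ x ∧ ℓ x ≤ c₂)
    (h : ℝ)
    (hh : ∀ ε : ℝ, 0 < ε → ∃ k : ℕ, ∀ x ∈ T, ¬ IsLeaf T x → k ≤ x.length →
      |(∑' y : succs T x, phi (BQ y / BQ x)) / ℓ x - h| < ε)
    (hDn : ∀ n : ℕ, Summable fun x : secn T n => |BP x * Real.logb 2 (BP x / BQ x)|)
    (hDlim : Tendsto (fun n : ℕ =>
        (∑' x : secn T n, BP x * Real.logb 2 (BP x / BQ x)) / n) atTop (nhds 0)) :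
    Tendsto (fun n : ℕ =>
        (∑' x : secn T n, phi (BP x)) / (∑' x : secn T n, lenWt ℓ x * BP x))
      atTop (nhds h) ∧
    Tendsto (fun n : ℕ =>
        (∑' x : secn T n, phi (BQ x)) / (∑' x : secn T n, lenWt ℓ x * BQ x))
      atTop (nhds h) := by
  refine ⟨AER.main T hT BP BQ hBP hBQ hendsP hUSp hUSq hHPn ℓ c₁ c₂ hc₁ hc₁₂ hℓ h hh hDn hDlim,
    AER.main T hT BQ BQ hBQ hBQ hendsQ hUSq hUSq hHQn ℓ c₁ c₂ hc₁ hc₁₂ hℓ h hh ?_ ?_⟩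
  · intro n
    have : (fun x : secn T n => |BQ x * Real.logb 2 (BQ x / BQ x)|) = fun _ => 0 := by
      funext x
      rw [div_self (hBQ.1 x (AER.sec_nonleaf_mem x.2)).ne']; simp
    rw [this]; exact summable_zero
  · have : (fun n : ℕ => (∑' x : secn T n, BQ x * Real.logb 2 (BQ x / BQ x)) / (n : ℝ))
        = fun _ => 0 := by
      funext n
      have : (fun x : secn T n => BQ x * Real.logb 2 (BQ x / BQ x)) = fun _ => 0 := by
        funext x
        rw [div_self (hBQ.1 x (AER.sec_nonleaf_mem x.2)).ne']; simp
      rw [this]; simp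
    rw [this]; exact tendsto_const_nhds
end
end
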